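/- arXiv:2206.14032 — 2 statements merged into one kernel-verified Lean document; each statement's English description precedes it below -/
import Mathlib

section
/- Let $a$, $b$, $c$ be coprime positive integers with $\min\{a,b,c\} > 1$, where $c$ is an odd prime and $(a,b,c) \neq (3,10,13)$ and $(a,b,c) \neq (10,3,13)$. If $(x_1,y_1,z_1)$ and $(x_2,y_2,z_2)$ are solutions in positive integers of $a^x + b^y = c^z$ with $x_1 \equiv x_2 \pmod 2$ and $y_1 \equiv y_2 \pmod 2$, then $(x_1,y_1,z_1) = (x_2,y_2,z_2)$. -/
/-- The pair `(U_k, V_k)` with `(√G + √(-H))^(2k+1) = √G U_k + √(-H) V_k`. -/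
def uvPair (G H : ℤ) : ℕ → ℤ × ℤ
  | 0 => (1, 1)
  | k + 1 => ((G - H) * (uvPair G H k).1 - 2 * H * (uvPair G H k).2,
      (G - H) * (uvPair G H k).2 + 2 * G * (uvPair G H k).1)

/-- First component. -/
def seqU (G H : ℤ) (k : ℕ) : ℤ := (uvPair G H k).1

/-- Second component. -/
def seqV (G H : ℤ) (k : ℕ) : ℤ := (uvPair G H k).2

lemma seqU_zero (G H : ℤ) : seqU G H 0 = 1 := rfl
lemma seqV_zero (G H : ℤ) : seqV G H 0 = 1 := rfl
lemma seqU_succ (G H : ℤ) (k : ℕ) :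
    seqU G H (k + 1) = (G - H) * seqU G H k - 2 * H * seqV G H k := rfl
lemma seqV_succ (G H : ℤ) (k : ℕ) :
    seqV G H (k + 1) = (G - H) * seqV G H k + 2 * G * seqU G H k := rfl

lemma seq_norm (G H : ℤ) (k : ℕ) :
    G * seqU G H k ^ 2 + H * seqV G H k ^ 2 = (G + H) ^ (2 * k + 1) := by
  induction k with
  | zero => simp [seqU_zero, seqV_zero]
  | succ k ih =>
    have : (G + H) ^ (2 * (k + 1) + 1) = (G + H) ^ (2 * k + 1) * (G + H) ^ 2 := by ring
    rw [this, ← ih, seqU_succ, seqV_succ]; ring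

lemma seq_swap (G H : ℤ) (k : ℕ) :
    seqU H G k = (-1) ^ k * seqV G H k ∧ seqV H G k = (-1) ^ k * seqU G H k := by
  induction k with
  | zero => simp [seqU_zero, seqV_zero]
  | succ k ih =>
    obtain ⟨h1, h2⟩ := ih
    rw [seqU_succ, seqV_succ, seqU_succ, seqV_succ, h1, h2]
    constructor <;> ring

lemma abs_neg_one_pow_mul (k : ℕ) (x : ℤ) : ((-1) ^ k * x).natAbs = x.natAbs := by
  rw [Int.natAbs_mul, Int.natAbs_pow]; simp

lemma seq_swapU (G H : ℤ) (k : ℕ) : (seqU H G k).natAbs = (seqV G H k).natAbs := by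
  rw [(seq_swap G H k).1, abs_neg_one_pow_mul]

lemma seq_swapV (G H : ℤ) (k : ℕ) : (seqV H G k).natAbs = (seqU G H k).natAbs := by
  rw [(seq_swap G H k).2, abs_neg_one_pow_mul]

lemma seq_complex (g h : ℝ) (G H : ℤ) (hg : g ^ 2 = G) (hh : h ^ 2 = H) (k : ℕ) :
    ((g : ℂ) + h * Complex.I) ^ (2 * k + 1)
      = ((g * seqU G H k : ℝ) : ℂ) + ((h * seqV G H k : ℝ) : ℂ) * Complex.I := by
  have hg' : (g : ℂ) ^ 2 = G := by exact_mod_cast congrArg (Complex.ofReal) hg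
  have hh' : (h : ℂ) ^ 2 = H := by exact_mod_cast congrArg (Complex.ofReal) hh
  induction k with
  | zero => simp [seqU_zero, seqV_zero]
  | succ k ih =>
    have : ((g : ℂ) + h * Complex.I) ^ (2 * (k + 1) + 1)
      = ((g : ℂ) + h * Complex.I) ^ (2 * k + 1) * ((g : ℂ) + h * Complex.I) ^ 2 := by ring
    rw [this, ih, seqU_succ, seqV_succ]
    push_cast
    rw [← hg', ← hh']
    have hI := Complex.I_sq
    have hI3 : Complex.I ^ 3 = - Complex.I := by rw [pow_succ, hI]; ring
    ring_nf
    rw [hI3, hI]; ring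

lemma seq_comp (G H : ℤ) (hG : 0 < G) (hH : 0 < H) (j k K : ℕ)
    (hK : 2 * K + 1 = (2 * j + 1) * (2 * k + 1)) :
    seqU G H K = seqU G H j * seqU (G * seqU G H j ^ 2) (H * seqV G H j ^ 2) k ∧
    seqV G H K = seqV G H j * seqV (G * seqU G H j ^ 2) (H * seqV G H j ^ 2) k := by
  have hG' : (0 : ℝ) < G := by exact_mod_cast hG
  have hH' : (0 : ℝ) < H := by exact_mod_cast hH
  have hg : (√(G : ℝ)) ^ 2 = G := Real.sq_sqrt hG'.le
  have hh : (√(H : ℝ)) ^ 2 = H := Real.sq_sqrt hH'.le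
  have e1 := seq_complex _ _ G H hg hh K
  have e2 := seq_complex _ _ G H hg hh j
  have e3 := seq_complex (√(G : ℝ) * seqU G H j) (√(H : ℝ) * seqV G H j)
    (G * seqU G H j ^ 2) (H * seqV G H j ^ 2) (by push_cast; rw [mul_pow, hg])
    (by push_cast; rw [mul_pow, hh]) k
  rw [← e2, ← pow_mul, ← hK, e1] at e3
  have hre := congrArg Complex.re e3
  have him := congrArg Complex.im e3
  simp only [Complex.add_re, Complex.add_im, Complex.ofReal_re, Complex.ofReal_im, Complex.mul_re,
    Complex.mul_im, Complex.I_re, Complex.I_im, mul_zero, mul_one, zero_mul, sub_zero, add_zero,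
    zero_add] at hre him
  have hg0 : √(G : ℝ) ≠ 0 := (Real.sqrt_pos.2 hG').ne'
  have hh0 : √(H : ℝ) ≠ 0 := (Real.sqrt_pos.2 hH').ne'
  rw [mul_assoc] at hre him
  have hre := mul_left_cancel₀ hg0 hre
  have him := mul_left_cancel₀ hh0 him
  exact ⟨by exact_mod_cast hre, by exact_mod_cast him⟩

lemma seq_cong1 (G H : ℤ) (k : ℕ) : ∃ s t : ℤ,
    seqU G H k = (-1) ^ k * (2 * k + 1) * H ^ k + G * s ∧
    seqV G H k = (-1) ^ k * H ^ k + G * t := by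
  induction k with
  | zero => exact ⟨0, 0, by simp [seqU_zero, seqV_zero]⟩
  | succ k ih =>
    obtain ⟨s, t, h1, h2⟩ := ih
    refine ⟨(seqU G H k) - H * s - 2 * H * t, seqV G H k - H * t + 2 * seqU G H k, ?_, ?_⟩
    · rw [seqU_succ, sub_mul, h2, show H * seqU G H k = H * ((-1) ^ k * (2 * k + 1) * H ^ k + G * s)
        by rw [h1]]
      push_cast; ring
    · rw [seqV_succ, sub_mul, show H * seqV G H k = H * ((-1) ^ k * H ^ k + G * t) by rw [h2]]
      push_cast; ring

lemma seq_cong2 (G H : ℤ) (k : ℕ) : ∃ s t : ℤ,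
    3 * seqU G H (k + 1) = (-1) ^ (k + 1) * (3 * (2 * k + 3) * H ^ (k + 1)
      - (2 * k + 3) * (k + 1) * (2 * k + 1) * G * H ^ k) + G ^ 2 * s ∧
    seqV G H (k + 1) = (-1) ^ (k + 1) * (H ^ (k + 1) - (2 * k + 3) * (k + 1) * G * H ^ k)
      + G ^ 2 * t := by
  induction k with
  | zero => exact ⟨0, 0, by simp [seqU_succ, seqV_succ, seqU_zero, seqV_zero]; ring,
      by simp [seqU_succ, seqV_succ, seqU_zero, seqV_zero]; ring⟩
  | succ k ih =>
    obtain ⟨s, t, h1, h2⟩ := ih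
    have h3 : 3 * seqU G H (k + 1 + 1)
      = (G - H) * (3 * seqU G H (k + 1)) - 6 * H * seqV G H (k + 1) := by
      rw [seqU_succ G H (k + 1)]; ring
    have h4 : 3 * seqV G H (k + 1 + 1)
      = 3 * (G - H) * seqV G H (k + 1) + 2 * G * (3 * seqU G H (k + 1)) := by
      rw [seqV_succ G H (k + 1)]; ring
    rw [h1, h2] at h3
    obtain ⟨s', t', h1', -⟩ := seq_cong1 G H (k + 1)
    refine ⟨(G - H) * s - 6 * H * t
       - (-1) ^ (k + 1) * (2 * k + 3) * (k + 1) * (2 * k + 1) * H ^ k, (G - H) * t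
        - (-1) ^ (k + 1) * (2 * k + 3) * (k + 1) * H ^ k + 2 * s', ?_, ?_⟩
    · rw [h3]; push_cast; ring
    · rw [seqV_succ G H (k + 1), h2, h1']; push_cast; ring

lemma half (G H : ℤ) (hG : 1 < G) (hcop : IsCoprime G H) (k : ℕ)
    (hq : Nat.Prime (2 * k + 1))
    (hU : ∀ p : ℕ, p.Prime → (p : ℤ) ∣ seqU G H k → (p : ℤ) ∣ G) :
    ∃ i, (seqU G H k).natAbs = (2 * k + 1) ^ i ∧ (0 < i → ((2 * k + 1 : ℕ) : ℤ) ∣ G) ∧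
      (2 ≤ k → i ≤ 1) := by
  have hnz : (seqU G H k).natAbs ≠ 0 := by
    intro h0
    rw [Int.natAbs_eq_zero] at h0
    obtain ⟨p, hp1, hp⟩ := Nat.exists_infinite_primes (G.natAbs + 1)
    have := hU p hp (by rw [h0]; exact dvd_zero _)
    have := Int.le_of_dvd (by omega) this
    omega
  have key : ∀ p : ℕ, p.Prime → (p : ℤ) ∣ G → ¬ (p : ℤ) ∣ H := by
    intro p hp h1 h2
    have := (hcop.of_isCoprime_of_dvd_left h1).of_isCoprime_of_dvd_right h2
    exact (Nat.prime_iff_prime_int.1 hp).not_isUnit (isCoprime_self.1 this)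
  have huniq : ∀ {d : ℕ}, d.Prime → d ∣ (seqU G H k).natAbs → d = 2 * k + 1 := by
    intro d hd hdv
    have hdv' : (d : ℤ) ∣ seqU G H k := Int.natCast_dvd.2 hdv
    have hdG := hU d hd hdv'
    obtain ⟨s, t, h1, h2⟩ := seq_cong1 G H k
    have hpr := Nat.prime_iff_prime_int.1 hd
    have h3 : (d : ℤ) ∣ (-1) ^ k * (2 * k + 1) * H ^ k := by
      have := dvd_sub hdv' (hdG.mul_right s)
      rwa [h1, add_sub_cancel_right] at this
    rcases hpr.dvd_or_dvd h3 with h | h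
    · rcases hpr.dvd_or_dvd h with h | h
      · have := hpr.dvd_of_dvd_pow h
        exact absurd (isUnit_of_dvd_unit this (by simp)) hpr.not_isUnit
      · have : d ∣ 2 * k + 1 := by exact_mod_cast h
        exact (Nat.prime_dvd_prime_iff_eq hd hq).1 this
    · exact absurd (hpr.dvd_of_dvd_pow h) (key d hd hdG)
  have heq := Nat.eq_prime_pow_of_unique_prime_dvd hnz huniq
  set i := (seqU G H k).natAbs.primeFactorsList.length with hi
  have hGdvd : 0 < i → ((2 * k + 1 : ℕ) : ℤ) ∣ G := by
    intro hi0
    apply hU _ hq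
    rw [Int.natCast_dvd, heq]
    exact dvd_pow_self _ hi0.ne'
  refine ⟨i, heq, hGdvd, ?_⟩
  intro hk
  by_contra hi2
  push Not at hi2
  have hqG := hGdvd (by omega)
  have hqH := key _ hq hqG
  have hpr := Nat.prime_iff_prime_int.1 hq
  have hq2 : ((2 * k + 1 : ℕ) : ℤ) ^ 2 ∣ seqU G H k := by
    have : (2 * k + 1) ^ 2 ∣ (seqU G H k).natAbs := by rw [heq]; exact pow_dvd_pow _ hi2
    have h := Int.natCast_dvd.2 this
    exact_mod_cast h
  obtain ⟨k, rfl⟩ : ∃ k', k = k' + 1 := ⟨k - 1, by omega⟩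
  obtain ⟨s, t, h1, -⟩ := seq_cong2 G H k
  set q : ℤ := ((2 * (k + 1) + 1 : ℕ) : ℤ) with hqdef
  have hq' : (2 * k + 3 : ℤ) = q := by rw [hqdef]; push_cast; ring
  rw [hq'] at h1
  have hq0 : q ≠ 0 := hpr.ne_zero
  have d1 : q ^ 2 ∣ (-1) ^ (k + 1) * (3 * q * H ^ (k + 1)) := by
    have e : (-1) ^ (k + 1) * (3 * q * H ^ (k + 1)) = 3 * seqU G H (k + 1)
      + (-1) ^ (k + 1) * (q * (k + 1) * (2 * k + 1) * G * H ^ k) - G ^ 2 * s := by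
      rw [h1]; ring
    rw [e]
    refine dvd_sub (dvd_add (hq2.mul_left 3) ?_) ((pow_dvd_pow_of_dvd hqG 2).mul_right s)
    obtain ⟨g, hg⟩ := hqG
    refine ⟨(-1) ^ (k + 1) * (k + 1) * (2 * k + 1) * g * H ^ k, ?_⟩
    rw [hg]; ring
  have d2 : q ∣ (-1) ^ (k + 1) * 3 * H ^ (k + 1) := by
    have : q * q ∣ q * ((-1) ^ (k + 1) * 3 * H ^ (k + 1)) := by
      convert d1 using 1 <;> ring
    exact (mul_dvd_mul_iff_left hq0).1 this
  rcases hpr.dvd_or_dvd d2 with h | h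
  · rcases hpr.dvd_or_dvd h with h | h
    · have := hpr.dvd_of_dvd_pow h
      exact absurd (isUnit_of_dvd_unit this (by simp)) hpr.not_isUnit
    · have := Int.le_of_dvd (by norm_num) h
      omega
  · exact hqH (hpr.dvd_of_dvd_pow h)

lemma sq_lt_three_pow (k : ℕ) (hk : 2 ≤ k) : (2 * k + 1) ^ 2 < 3 ^ (2 * k) := by
  induction k, hk using Nat.le_induction with
  | base => norm_num
  | succ k hk ih =>
    have : 3 ^ (2 * (k + 1)) = 3 ^ (2 * k) * 9 := by ring
    rw [this]; nlinarith

/-- The cubic case. -/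
lemma cubic (G H : ℤ) (hG : 1 < G) (i : ℕ) (hU : (seqU G H 1).natAbs = 3 ^ i)
    (hV : (seqV G H 1).natAbs = 1) : 2 ≤ i ∧ ¬ (9 : ℤ) ∣ G := by
  have eU : seqU G H 1 = G - 3 * H := by
    rw [seqU_succ, seqU_zero, seqV_zero]; ring
  have eV : seqV G H 1 = 3 * G - H := by
    rw [seqV_succ, seqU_zero, seqV_zero]; ring
  rw [eU] at hU
  rw [eV] at hV
  have hi : 2 ≤ i := by
    by_contra h
    have : i = 0 ∨ i = 1 := by omega
    rcases this with rfl | rfl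
    · norm_num at hU; omega
    · norm_num at hU; omega
  obtain ⟨j, rfl⟩ : ∃ j, i = j + 2 := ⟨i - 2, by omega⟩
  refine ⟨hi, ?_⟩
  rw [pow_add] at hU
  generalize 3 ^ j = t at hU
  omega

lemma stormer (G H : ℤ) (hG : 1 < G) (hH : 1 < H) (hcop : IsCoprime G H) (k : ℕ)
    (hq : Nat.Prime (2 * k + 1))
    (hU : ∀ p : ℕ, p.Prime → (p : ℤ) ∣ seqU G H k → (p : ℤ) ∣ G)
    (hV : ∀ p : ℕ, p.Prime → (p : ℤ) ∣ seqV G H k → (p : ℤ) ∣ H) :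
    k = 1 ∧ ((¬ (9 : ℤ) ∣ G ∧ (3 : ℤ) ∣ G ∧ (∃ i, 2 ≤ i ∧ (seqU G H k).natAbs = 3 ^ i) ∧
        (seqV G H k).natAbs = 1) ∨
      (¬ (9 : ℤ) ∣ H ∧ (3 : ℤ) ∣ H ∧ (∃ i, 2 ≤ i ∧ (seqV G H k).natAbs = 3 ^ i) ∧
        (seqU G H k).natAbs = 1)) := by
  obtain ⟨i, hi, hi1, hi2⟩ := half G H hG hcop k hq hU
  obtain ⟨j, hj, hj1, hj2⟩ := half H G hH hcop.symm k hq (by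
    intro p hp h
    apply hV p hp
    rw [Int.natCast_dvd] at h ⊢
    rwa [seq_swapU] at h)
  rw [seq_swapU] at hj
  have hij : i = 0 ∨ j = 0 := by
    by_contra h
    push Not at h
    have h1 := hi1 (by omega)
    have h2 := hj1 (by omega)
    have := (hcop.of_isCoprime_of_dvd_left h1).of_isCoprime_of_dvd_right h2
    exact (Nat.prime_iff_prime_int.1 hq).not_isUnit (isCoprime_self.1 this)
  have hk0 : k ≠ 0 := by rintro rfl; norm_num at hq
  have hk : k = 1 := by
    by_contra hk1
    have hk2 : 2 ≤ k := by omega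
    have hn := seq_norm G H k
    have b : ∀ (x : ℤ) (i : ℕ), x.natAbs = (2 * k + 1) ^ i → i ≤ 1 → x ^ 2 ≤ (2 * k + 1) ^ 2 := by
      intro x i hx hi
      rw [sq_le_sq]
      rw [Int.abs_eq_natAbs, hx]
      have : (2 * k + 1) ^ i ≤ (2 * k + 1) ^ 1 := Nat.pow_le_pow_right (by omega) hi
      rw [abs_of_nonneg (by positivity)]
      exact_mod_cast (by simpa using this)
    have b1 := b _ i hi (hi2 hk2)
    have b2 := b _ j hj (hj2 hk2)
    have l1 : (G + H) ^ (2 * k + 1) ≤ (G + H) * (2 * k + 1) ^ 2 := by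
      rw [← hn]
      nlinarith [mul_le_mul_of_nonneg_left b1 (by omega : 0 ≤ G),
        mul_le_mul_of_nonneg_left b2 (by omega : 0 ≤ H)]
    have l2 : (G + H) ^ (2 * k) ≤ (2 * k + 1) ^ 2 := by
      rw [pow_succ, mul_comm] at l1
      exact le_of_mul_le_mul_left l1 (by omega)
    have l3 : (3 : ℤ) ^ (2 * k) ≤ (G + H) ^ (2 * k) :=
      pow_le_pow_left₀ (by norm_num) (by omega) _
    have l4 : ((2 * k + 1) ^ 2 : ℤ) < 3 ^ (2 * k) := by exact_mod_cast sq_lt_three_pow k hk2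
    omega
  subst hk
  refine ⟨rfl, ?_⟩
  norm_num at hi hj hi1 hj1
  rcases hij with rfl | rfl
  · right
    have := cubic H G hH j (by rw [seq_swapU, hj]) (by rw [seq_swapV, hi, pow_zero])
    exact ⟨this.2, hj1 (by omega), ⟨j, this.1, hj⟩, by simpa using hi⟩
  · left
    have := cubic G H hG i hi (by simpa using hj)
    exact ⟨this.2, hi1 (by omega), ⟨i, this.1, hi⟩, by simpa using hj⟩

lemma cop_of_primes (G H : ℤ) (h : ∀ p : ℕ, p.Prime → (p : ℤ) ∣ G → (p : ℤ) ∣ H → False) :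
    IsCoprime G H := by
  rw [Int.isCoprime_iff_nat_coprime]
  apply Nat.coprime_of_dvd
  intro p hp h1 h2
  exact h p hp (Int.natCast_dvd.2 h1) (Int.natCast_dvd.2 h2)

/-- One factorization step. -/
lemma stepK (G H : ℤ) (hG : 1 < G) (hH : 1 < H) (hcop : IsCoprime G H) (K : ℕ) (hK : K ≠ 0)
    (hU : ∀ p : ℕ, p.Prime → (p : ℤ) ∣ seqU G H K → (p : ℤ) ∣ G)
    (hV : ∀ p : ℕ, p.Prime → (p : ℤ) ∣ seqV G H K → (p : ℤ) ∣ H) :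
    ∃ j, 2 * K + 1 = (2 * j + 1) * 3 ∧ ∃ G' H', G' = G * seqU G H j ^ 2 ∧ H' = H * seqV G H j ^ 2 ∧
      IsCoprime G' H' ∧ seqU G H K = seqU G H j * seqU G' H' 1 ∧
      seqV G H K = seqV G H j * seqV G' H' 1 ∧
      ((¬ (9 : ℤ) ∣ G' ∧ (3 : ℤ) ∣ G' ∧ (∃ i, 2 ≤ i ∧ (seqU G' H' 1).natAbs = 3 ^ i) ∧
        (seqV G' H' 1).natAbs = 1) ∨
      (¬ (9 : ℤ) ∣ H' ∧ (3 : ℤ) ∣ H' ∧ (∃ i, 2 ≤ i ∧ (seqV G' H' 1).natAbs = 3 ^ i) ∧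
        (seqU G' H' 1).natAbs = 1)) := by
  have hq : (2 * K + 1).minFac.Prime := Nat.minFac_prime (by omega)
  obtain ⟨m, hm⟩ := Nat.minFac_dvd (2 * K + 1)
  have hodd : Odd ((2 * K + 1).minFac * m) := by rw [← hm]; exact ⟨K, rfl⟩
  rw [Nat.odd_mul] at hodd
  obtain ⟨⟨k, hk⟩, ⟨j, hj⟩⟩ := hodd
  rw [hk, hj, mul_comm (2 * k + 1)] at hm
  rw [hk] at hq
  obtain ⟨eU, eV⟩ := seq_comp G H (by omega) (by omega) j k K hm
  have nzU : seqU G H K ≠ 0 := by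
    intro h0
    obtain ⟨p, hp1, hp⟩ := Nat.exists_infinite_primes (G.natAbs + 1)
    have := hU p hp (by rw [h0]; exact dvd_zero _)
    have := Int.le_of_dvd (by omega) this
    omega
  have nzV : seqV G H K ≠ 0 := by
    intro h0
    obtain ⟨p, hp1, hp⟩ := Nat.exists_infinite_primes (H.natAbs + 1)
    have := hV p hp (by rw [h0]; exact dvd_zero _)
    have := Int.le_of_dvd (by omega) this
    omega
  have pU : 0 < seqU G H j ^ 2 := by
    have : seqU G H j ≠ 0 := fun h => nzU (by rw [eU, h, zero_mul])
    positivity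
  have pV : 0 < seqV G H j ^ 2 := by
    have : seqV G H j ≠ 0 := fun h => nzV (by rw [eV, h, zero_mul])
    positivity
  have dU : ∀ p : ℕ, p.Prime → (p : ℤ) ∣ G * seqU G H j ^ 2 → (p : ℤ) ∣ G := by
    intro p hp h
    have hpr := Nat.prime_iff_prime_int.1 hp
    rcases hpr.dvd_or_dvd h with h | h
    · exact h
    · exact hU p hp (by rw [eU]; exact (hpr.dvd_of_dvd_pow h).mul_right _)
  have dV : ∀ p : ℕ, p.Prime → (p : ℤ) ∣ H * seqV G H j ^ 2 → (p : ℤ) ∣ H := by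
    intro p hp h
    have hpr := Nat.prime_iff_prime_int.1 hp
    rcases hpr.dvd_or_dvd h with h | h
    · exact h
    · exact hV p hp (by rw [eV]; exact (hpr.dvd_of_dvd_pow h).mul_right _)
  have hcop' : IsCoprime (G * seqU G H j ^ 2) (H * seqV G H j ^ 2) := by
    apply cop_of_primes
    intro p hp h1 h2
    have := (hcop.of_isCoprime_of_dvd_left (dU p hp h1)).of_isCoprime_of_dvd_right (dV p hp h2)
    exact (Nat.prime_iff_prime_int.1 hp).not_isUnit (isCoprime_self.1 this)
  obtain ⟨rfl, hh⟩ := stormer (G * seqU G H j ^ 2) (H * seqV G H j ^ 2) (by nlinarith)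
    (by nlinarith) hcop' k hq
    (fun p hp h => (hU p hp (by rw [eU]; exact h.mul_left _)).mul_right _)
    (fun p hp h => (hV p hp (by rw [eV]; exact h.mul_left _)).mul_right _)
  exact ⟨j, hm, _, _, rfl, rfl, hcop', eU, eV, hh⟩

lemma nine_dvd (x G : ℤ) (i : ℕ) (hi : 2 ≤ i) (hx : x.natAbs = 3 ^ i) : (9 : ℤ) ∣ G * x ^ 2 := by
  have : (9 : ℤ) ∣ x := by
    rw [show (9 : ℤ) = ((3 ^ 2 : ℕ) : ℤ) by norm_num, Int.natCast_dvd, hx]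
    exact pow_dvd_pow _ hi
  exact ((this.trans (dvd_pow_self x two_ne_zero))).mul_left _

lemma final_K (G H : ℤ) (hG : 1 < G) (hH : 1 < H) (hcop : IsCoprime G H) (K : ℕ) (hK : K ≠ 0)
    (hU : ∀ p : ℕ, p.Prime → (p : ℤ) ∣ seqU G H K → (p : ℤ) ∣ G)
    (hV : ∀ p : ℕ, p.Prime → (p : ℤ) ∣ seqV G H K → (p : ℤ) ∣ H) :
    K = 1 ∧ ((¬ (9 : ℤ) ∣ G ∧ (3 : ℤ) ∣ G ∧ (∃ i, 2 ≤ i ∧ (seqU G H 1).natAbs = 3 ^ i) ∧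
        (seqV G H 1).natAbs = 1) ∨
      (¬ (9 : ℤ) ∣ H ∧ (3 : ℤ) ∣ H ∧ (∃ i, 2 ≤ i ∧ (seqV G H 1).natAbs = 3 ^ i) ∧
        (seqU G H 1).natAbs = 1)) := by
  obtain ⟨j, hj, G', H', rfl, rfl, hc', eU, eV, hh⟩ := stepK G H hG hH hcop K hK hU hV
  by_cases hj0 : j = 0
  · subst hj0
    simp only [seqU_zero, seqV_zero, one_pow, mul_one] at hh
    exact ⟨by omega, hh⟩
  · exfalso
    obtain ⟨l, hl, G'', H'', hG'', hH'', hc'', eU', eV', hh'⟩ := stepK G H hG hH hcop j hj0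
      (fun p hp h => hU p hp (by rw [eU]; exact h.mul_right _))
      (fun p hp h => hV p hp (by rw [eV]; exact h.mul_right _))
    have eG : G * seqU G H j ^ 2 = G'' * seqU G'' H'' 1 ^ 2 := by rw [eU', hG'']; ring
    have eH : H * seqV G H j ^ 2 = H'' * seqV G'' H'' 1 ^ 2 := by rw [eV', hH'']; ring
    rw [eG, eH] at hh hc'
    have hcon : ∀ x y : ℤ, IsCoprime x y → (9 : ℤ) ∣ x → (3 : ℤ) ∣ y → False := by
      intro x y h h9 h3
      have h9' : (3 : ℤ) ∣ x := Dvd.dvd.trans (by norm_num) h9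
      have := (h.of_isCoprime_of_dvd_left h9').of_isCoprime_of_dvd_right h3
      rw [isCoprime_self] at this
      norm_num [Int.isUnit_iff] at this
    rcases hh' with ⟨-, -, ⟨i, hi, hi'⟩, -⟩ | ⟨-, -, ⟨i, hi, hi'⟩, -⟩
    · have h9 := nine_dvd _ G'' i hi hi'
      rcases hh with ⟨h, -⟩ | ⟨-, h, -⟩
      · exact h h9
      · exact hcon _ _ hc' h9 h
    · have h9 := nine_dvd _ H'' i hi hi'
      rcases hh with ⟨-, h, -⟩ | ⟨h, -⟩
      · exact hcon _ _ hc'.symm h9 h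
      · exact h h9

lemma divis (A B c u v r s : ℤ) (z w m : ℕ) (hc : Prime c) (h2 : ¬ c ∣ 2) (hA : ¬ c ∣ A)
    (hB : ¬ c ∣ B) (hu : ¬ c ∣ u) (hr : ¬ c ∣ r) (hmz : m ≤ z) (hmw : m ≤ w)
    (h1 : A * u ^ 2 + B * v ^ 2 = c ^ z) (h3 : r ^ 2 + A * B * s ^ 2 = c ^ w) :
    ∃ σ u' v' : ℤ, (σ = 1 ∨ σ = -1) ∧ u * r - σ * B * v * s = c ^ m * u' ∧
      v * r + σ * A * u * s = c ^ m * v' := by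
  have hz : c ^ m ∣ c ^ z := pow_dvd_pow _ hmz
  have hw : c ^ m ∣ c ^ w := pow_dvd_pow _ hmw
  have cop : ∀ x : ℤ, ¬ c ∣ x → IsCoprime (c ^ m) x := fun x hx =>
    ((Prime.coprime_iff_not_dvd hc).2 hx).pow_left
  have hprod : c ^ m ∣ (u * r - B * v * s) * (u * r + B * v * s) := by
    have : c ^ m ∣ A * ((u * r - B * v * s) * (u * r + B * v * s)) := by
      have e : A * ((u * r - B * v * s) * (u * r + B * v * s))
        = r ^ 2 * (A * u ^ 2 + B * v ^ 2) - B * v ^ 2 * (r ^ 2 + A * B * s ^ 2) := by ring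
      rw [e, h1, h3]
      exact dvd_sub (hz.mul_left _) (hw.mul_left _)
    exact (cop A hA).dvd_of_dvd_mul_left this
  have hσ : ∃ σ : ℤ, (σ = 1 ∨ σ = -1) ∧ c ^ m ∣ u * r - σ * B * v * s := by
    by_cases h : c ∣ u * r - B * v * s
    · refine ⟨1, Or.inl rfl, ?_⟩
      have h' : ¬ c ∣ u * r + B * v * s := by
        intro h'
        have := dvd_add h h'
        have e : u * r - B * v * s + (u * r + B * v * s) = 2 * (u * r) := by ring
        rw [e] at this
        rcases hc.dvd_or_dvd this with h | h
        · exact h2 h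
        · rcases hc.dvd_or_dvd h with h | h
          · exact hu h
          · exact hr h
      rw [one_mul]
      exact (cop _ h').dvd_of_dvd_mul_right hprod
    · refine ⟨-1, Or.inr rfl, ?_⟩
      have := (cop _ h).dvd_of_dvd_mul_left hprod
      rw [show u * r - -1 * B * v * s = u * r + B * v * s by ring]; exact this
  obtain ⟨σ, hσ1, u', hu'⟩ := hσ
  have hσ2 : σ ^ 2 = 1 := by rcases hσ1 with h | h <;> rw [h] <;> norm_num
  have hn : A * (u * r - σ * B * v * s) ^ 2 + B * (v * r + σ * A * u * s) ^ 2 = c ^ z * c ^ w := by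
    rw [← h1, ← h3]
    linear_combination (A * B ^ 2 * v ^ 2 * s ^ 2 + B * A ^ 2 * u ^ 2 * s ^ 2) * hσ2
  have hv : c ^ m ∣ v * r + σ * A * u * s := by
    have : (c ^ m) ^ 2 ∣ B * (v * r + σ * A * u * s) ^ 2 := by
      have e : B * (v * r + σ * A * u * s) ^ 2
        = c ^ z * c ^ w - A * (u * r - σ * B * v * s) ^ 2 := by rw [← hn]; ring
      rw [e, hu', sq]
      exact dvd_sub (mul_dvd_mul hz hw) ⟨A * u' ^ 2, by ring⟩
    have := ((cop B hB).pow_left (m := 2)).dvd_of_dvd_mul_left this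
    exact (Int.pow_dvd_pow_iff two_ne_zero).1 this
  obtain ⟨v', hv'⟩ := hv
  exact ⟨σ, u', v', hσ1, hu', hv'⟩

lemma not_dvd_v (A B c u v : ℤ) (z : ℕ) (hz : z ≠ 0) (hc : Prime c) (hA : ¬ c ∣ A) (hu : ¬ c ∣ u)
    (h1 : A * u ^ 2 + B * v ^ 2 = c ^ z) : ¬ c ∣ B * v ^ 2 := by
  intro h
  have : c ∣ A * u ^ 2 := by
    have e : A * u ^ 2 = c ^ z - B * v ^ 2 := by rw [← h1]; ring
    rw [e]; exact dvd_sub (dvd_pow_self c hz) h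
  rcases hc.dvd_or_dvd this with h | h
  · exact hA h
  · exact hu (hc.dvd_of_dvd_pow h)

/-- Two solutions of the same norm agree up to sign. -/
lemma same_norm (A B c u v u0 v0 : ℤ) (z : ℕ) (hc : Prime c) (hc0 : 0 < c) (h2 : ¬ c ∣ 2)
    (hz : z ≠ 0) (hA1 : 1 < A) (hB1 : 1 < B) (hA : ¬ c ∣ A) (hB : ¬ c ∣ B)
    (hu : ¬ c ∣ u) (hu0 : ¬ c ∣ u0)
    (h1 : A * u ^ 2 + B * v ^ 2 = c ^ z) (h0 : A * u0 ^ 2 + B * v0 ^ 2 = c ^ z) :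
    u ^ 2 = u0 ^ 2 ∧ v ^ 2 = v0 ^ 2 := by
  have cop : ∀ x : ℤ, ¬ c ∣ x → IsCoprime (c ^ z) x := fun x hx =>
    ((Prime.coprime_iff_not_dvd hc).2 hx).pow_left
  have hv0 : ¬ c ∣ v0 := fun h => not_dvd_v A B c u0 v0 z hz hc hA hu0 h0
    ((dvd_pow h two_ne_zero).mul_left _)
  have hprod : c ^ z ∣ (u * v0 - v * u0) * (u * v0 + v * u0) := by
    have : c ^ z ∣ A * ((u * v0 - v * u0) * (u * v0 + v * u0)) := by
      refine ⟨v0 ^ 2 - v ^ 2, ?_⟩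
      linear_combination v0 ^ 2 * h1 - v ^ 2 * h0
    exact (cop A hA).dvd_of_dvd_mul_left this
  have hpos : 0 < c ^ z := pow_pos hc0 z
  have key : ∀ σ : ℤ, σ ^ 2 = 1 → c ^ z ∣ u * v0 - σ * v * u0 → u * v0 - σ * v * u0 = 0 := by
    rintro σ hσ ⟨t, ht⟩
    have e : A * B * (u * v0 - σ * v * u0) ^ 2 + (A * u * u0 + σ * B * v * v0) ^ 2
        = c ^ z * c ^ z := by
      nth_rewrite 1 [← h1]
      rw [← h0]
      linear_combination (A * B * v ^ 2 * u0 ^ 2 + B ^ 2 * v ^ 2 * v0 ^ 2) * hσ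
    rw [ht] at e ⊢
    have e1 : (c ^ z * c ^ z) * (A * B * t ^ 2) ≤ (c ^ z * c ^ z) * 1 := by
      nlinarith [sq_nonneg (A * u * u0 + σ * B * v * v0)]
    have e2 := le_of_mul_le_mul_left e1 (by positivity)
    have e3 : t ^ 2 = 0 := by
      by_contra h
      have : 0 < t ^ 2 := lt_of_le_of_ne (sq_nonneg t) (Ne.symm h)
      have : 1 < A * B := by nlinarith
      nlinarith
    rw [pow_eq_zero_iff two_ne_zero] at e3
    rw [e3, mul_zero]
  have hsq : (u * v0) ^ 2 = (v * u0) ^ 2 := by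
    by_cases h : c ∣ u * v0 - v * u0
    · have h' : ¬ c ∣ u * v0 + v * u0 := by
        intro h'
        have := dvd_add h h'
        have e : u * v0 - v * u0 + (u * v0 + v * u0) = 2 * (u * v0) := by ring
        rw [e] at this
        rcases hc.dvd_or_dvd this with h | h
        · exact h2 h
        · rcases hc.dvd_or_dvd h with h | h
          · exact hu h
          · exact hv0 h
      have h3 := (cop _ h').dvd_of_dvd_mul_right hprod
      have := key 1 (by norm_num) (by simpa using h3)
      have e : u * v0 = v * u0 := by linear_combination this
      rw [e]
    · have h3 := (cop _ h).dvd_of_dvd_mul_left hprod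
      have := key (-1) (by norm_num) (by rw [show u * v0 - -1 * v * u0 = u * v0 + v * u0 by ring]; exact h3)
      have e : u * v0 = -(v * u0) := by linear_combination this
      rw [e]; ring
  have f1 : c ^ z * (u ^ 2 - u0 ^ 2) = 0 := by
    linear_combination B * hsq - u ^ 2 * h0 + u0 ^ 2 * h1
  have f2 : u ^ 2 = u0 ^ 2 := by
    rcases mul_eq_zero.1 f1 with h | h
    · omega
    · omega
  refine ⟨f2, ?_⟩
  have : B * (v ^ 2 - v0 ^ 2) = 0 := by linear_combination h1 - h0 - A * f2
  rcases mul_eq_zero.1 this with h | h <;> omega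

lemma sign_of_sq (x y : ℤ) (h : x ^ 2 = y ^ 2) : ∃ σ : ℤ, (σ = 1 ∨ σ = -1) ∧ x = σ * y := by
  rcases sq_eq_sq_iff_eq_or_eq_neg.1 h with h | h
  · exact ⟨1, Or.inl rfl, by rw [h]; ring⟩
  · exact ⟨-1, Or.inr rfl, by rw [h]; ring⟩

lemma bad_sign (G H : ℤ) (k : ℕ) : (G + H) ∣ (G - H) * seqU G H k + 2 * H * seqV G H k := by
  cases k with
  | zero => exact ⟨1, by rw [seqU_zero, seqV_zero]; ring⟩
  | succ k => exact ⟨(G + H) * seqU G H k, by rw [seqU_succ, seqV_succ]; ring⟩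

lemma generate (A B c u0 v0 : ℤ) (z0 : ℕ) (hc : Prime c) (hc0 : 0 < c) (h2 : ¬ c ∣ 2)
    (hz0 : z0 ≠ 0) (hA1 : 1 < A) (hB1 : 1 < B) (hA : ¬ c ∣ A) (hB : ¬ c ∣ B)
    (hu0 : ¬ c ∣ u0) (h0 : A * u0 ^ 2 + B * v0 ^ 2 = c ^ z0)
    (hmin : ∀ z : ℕ, z ≠ 0 → (∃ u v : ℤ, ¬ c ∣ u ∧ A * u ^ 2 + B * v ^ 2 = c ^ z) → z0 ≤ z)
    (z : ℕ) : z ≠ 0 → ∀ u v : ℤ, ¬ c ∣ u → A * u ^ 2 + B * v ^ 2 = c ^ z →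
      ∃ k, u ^ 2 = (u0 * seqU (A * u0 ^ 2) (B * v0 ^ 2) k) ^ 2 ∧
        v ^ 2 = (v0 * seqV (A * u0 ^ 2) (B * v0 ^ 2) k) ^ 2 := by
  induction z using Nat.strong_induction_on with
  | _ z ih =>
  intro hz u v hu h1
  have hle := hmin z hz ⟨u, v, hu, h1⟩
  rcases hle.eq_or_lt with rfl | hlt
  · refine ⟨0, ?_⟩
    rw [seqU_zero, seqV_zero, mul_one, mul_one]
    exact same_norm A B c u v u0 v0 _ hc hc0 h2 hz hA1 hB1 hA hB hu hu0 h1 h0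
  set G := A * u0 ^ 2 with hG
  set H := B * v0 ^ 2 with hH
  have hGc : ¬ c ∣ G := by
    intro h
    rcases hc.dvd_or_dvd h with h | h
    · exact hA h
    · exact hu0 (hc.dvd_of_dvd_pow h)
  have hcz0 : c ∣ G + H := by rw [h0]; exact dvd_pow_self c hz0
  have hr : ¬ c ∣ G - H := by
    intro h
    have := dvd_add h hcz0
    rw [show G - H + (G + H) = 2 * G by ring] at this
    rcases hc.dvd_or_dvd this with h | h
    · exact h2 h
    · exact hGc h
  have hrs : (G - H) ^ 2 + A * B * (2 * u0 * v0) ^ 2 = c ^ (2 * z0) := by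
    rw [mul_comm 2 z0, pow_mul, ← h0, hG, hH]; ring
  obtain ⟨σ, u', v', hσ, e1, e2⟩ := divis A B c u v (G - H) (2 * u0 * v0) z (2 * z0)
    (min z (2 * z0)) hc h2 hA hB hu hr (min_le_left _ _) (min_le_right _ _) h1 hrs
  have hσ2 : σ ^ 2 = 1 := by rcases hσ with h | h <;> rw [h] <;> norm_num
  have hcne : c ≠ 0 := hc0.ne'
  have hn : A * (u * (G - H) - σ * B * v * (2 * u0 * v0)) ^ 2
      + B * (v * (G - H) + σ * A * u * (2 * u0 * v0)) ^ 2 = c ^ z * c ^ (2 * z0) := by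
    rw [← h1, ← hrs]
    linear_combination (A * B ^ 2 * v ^ 2 * (2 * u0 * v0) ^ 2
      + B * A ^ 2 * u ^ 2 * (2 * u0 * v0) ^ 2) * hσ2
  rw [e1, e2] at hn
  have no_one : ¬ A * u' ^ 2 + B * v' ^ 2 = 1 := by
    intro h
    have a1 : u' = 0 := by
      by_contra hne
      have : 0 < u' ^ 2 := by positivity
      nlinarith [sq_nonneg v']
    have a2 : v' = 0 := by
      by_contra hne
      have : 0 < v' ^ 2 := by positivity
      nlinarith [sq_nonneg u']
    rw [a1, a2] at h
    norm_num at h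
  rcases lt_trichotomy z (2 * z0) with hzz | hzz | hzz
  · exfalso
    rw [min_eq_left hzz.le] at e1 e2 hn
    obtain ⟨d, hd⟩ : ∃ d, 2 * z0 = z + d := ⟨2 * z0 - z, by omega⟩
    have hn' : A * u' ^ 2 + B * v' ^ 2 = c ^ d := by
      rw [hd, pow_add] at hn
      have : c ^ z * c ^ z ≠ 0 := by positivity
      apply mul_left_cancel₀ this
      linear_combination hn
    have hu' : ¬ c ∣ u' := by
      intro h
      have hb : c ∣ B * v' ^ 2 := by
        have e : B * v' ^ 2 = c ^ d - A * u' ^ 2 := by rw [← hn']; ring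
        rw [e]
        exact dvd_sub (dvd_pow_self c (by omega)) ((dvd_pow h two_ne_zero).mul_left _)
      have hv' : c ∣ v' := by
        rcases hc.dvd_or_dvd hb with h | h
        · exact absurd h hB
        · exact hc.dvd_of_dvd_pow h
      apply hr
      have e : G - H = A * u * u' + B * v * v' := by
        have : c ^ z ≠ 0 := by positivity
        apply mul_left_cancel₀ this
        linear_combination A * u * e1 + B * v * e2 - (G - H) * h1
      rw [e]
      exact dvd_add (h.mul_left _) (hv'.mul_left _)
    have := hmin d (by omega) ⟨u', v', hu', hn'⟩
    omega
  · exfalso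
    rw [← hzz, min_self] at hn
    apply no_one
    have : c ^ z * c ^ z ≠ 0 := by positivity
    apply mul_left_cancel₀ this
    linear_combination hn
  · rw [min_eq_right hzz.le] at e1 e2 hn
    obtain ⟨d, hd⟩ : ∃ d, z = 2 * z0 + d := ⟨z - 2 * z0, by omega⟩
    have hcw : c ^ (2 * z0) ≠ 0 := by positivity
    have hn' : A * u' ^ 2 + B * v' ^ 2 = c ^ d := by
      rw [hd, pow_add] at hn
      apply mul_left_cancel₀ (mul_ne_zero hcw hcw)
      linear_combination hn
    have eu : u = u' * (G - H) + σ * B * v' * (2 * u0 * v0) := by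
      apply mul_left_cancel₀ hcw
      linear_combination (G - H) * e1 + σ * B * (2 * u0 * v0) * e2 - u * hrs
        - A * B * u * (2 * u0 * v0) ^ 2 * hσ2
    have ev : v = v' * (G - H) - σ * A * u' * (2 * u0 * v0) := by
      apply mul_left_cancel₀ hcw
      linear_combination (G - H) * e2 - σ * A * (2 * u0 * v0) * e1 - v * hrs
        - A * B * v * (2 * u0 * v0) ^ 2 * hσ2
    have hu' : ¬ c ∣ u' := by
      intro h
      have hb : c ∣ B * v' ^ 2 := by
        have e : B * v' ^ 2 = c ^ d - A * u' ^ 2 := by rw [← hn']; ring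
        rw [e]
        exact dvd_sub (dvd_pow_self c (by omega)) ((dvd_pow h two_ne_zero).mul_left _)
      have hv' : c ∣ v' := by
        rcases hc.dvd_or_dvd hb with h | h
        · exact absurd h hB
        · exact hc.dvd_of_dvd_pow h
      apply hu
      rw [eu]
      exact dvd_add (h.mul_right _) ((hv'.mul_left _).mul_right _)
    obtain ⟨k, k1, k2⟩ := ih d (by omega) (by omega) u' v' hu' hn'
    obtain ⟨τ, hτ, t1⟩ := sign_of_sq _ _ k1
    obtain ⟨ρ, hρ, t2⟩ := sign_of_sq _ _ k2
    have hτ2 : τ ^ 2 = 1 := by rcases hτ with h | h <;> rw [h] <;> norm_num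
    have hρ2 : ρ ^ 2 = 1 := by rcases hρ with h | h <;> rw [h] <;> norm_num
    have hs : σ * ρ = τ ∨ σ * ρ = -τ := by
      rcases hσ with h | h <;> rcases hτ with h' | h' <;> rcases hρ with h'' | h'' <;>
        rw [h, h', h''] <;> norm_num
    rcases hs with hs | hs
    · exfalso
      apply hu
      have e : u = τ * u0 * ((G - H) * seqU G H k + 2 * H * seqV G H k) := by
        rw [eu, t1, t2, hH]
        linear_combination (B * v0 ^ 2 * 2 * u0 * seqV G (B * v0 ^ 2) k) * hs
      rw [e]
      exact (hcz0.trans (bad_sign G H k)).mul_left _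
    · refine ⟨k + 1, ?_, ?_⟩
      · have e : u = τ * (u0 * seqU G H (k + 1)) := by
          rw [eu, t1, t2, seqU_succ, hH]
          linear_combination (B * v0 ^ 2 * 2 * u0 * seqV G (B * v0 ^ 2) k) * hs
        rw [e, mul_pow, hτ2, one_mul]
      · have hs' : σ * τ = -ρ := by linear_combination σ * hs - ρ * hσ2
        have e : v = ρ * (v0 * seqV G H (k + 1)) := by
          rw [ev, t1, t2, seqV_succ, hG]
          linear_combination (-(A * u0 ^ 2 * 2 * v0 * seqU (A * u0 ^ 2) H k)) * hs'
        rw [e, mul_pow, hρ2, one_mul]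

lemma except (a b c x₁ y₁ z₁ x₂ i : ℕ) (ha1 : 1 < a) (hb1 : 1 < b) (hc : Nat.Prime c)
    (hx₁ : 0 < x₁) (hy₁ : 0 < y₁) (hz₁ : 0 < z₁)
    (heq₁ : a ^ x₁ + b ^ y₁ = c ^ z₁) (h9 : ¬ 9 ∣ a ^ x₁) (h3 : 3 ∣ a ^ x₁) (hi : 2 ≤ i)
    (hU : (seqU ((a ^ x₁ : ℕ) : ℤ) ((b ^ y₁ : ℕ) : ℤ) 1).natAbs = 3 ^ i)
    (hV : (seqV ((a ^ x₁ : ℕ) : ℤ) ((b ^ y₁ : ℕ) : ℤ) 1).natAbs = 1)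
    (hx : a ^ x₂ = a ^ x₁ * (3 ^ i) ^ 2) : a = 3 ∧ b = 10 ∧ c = 13 := by
  have h3a : 3 ∣ a := Nat.prime_three.dvd_of_dvd_pow h3
  have hx1 : x₁ = 1 := by
    by_contra hne
    apply h9
    have h := pow_dvd_pow_of_dvd h3a 2
    exact (by simpa using h : 9 ∣ a ^ 2).trans (pow_dvd_pow a (by omega))
  subst hx1
  rw [pow_one] at *
  have ha : a = 3 := by
    have hlt : 1 < x₂ := by
      by_contra hle
      have h1 : a ^ x₂ ≤ a ^ 1 := Nat.pow_le_pow_right (by omega) (by omega)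
      have h2 : 1 < (3 ^ i) ^ 2 := Nat.one_lt_pow two_ne_zero (Nat.one_lt_pow (by omega) (by omega))
      nlinarith
    obtain ⟨y, rfl⟩ : ∃ y, x₂ = y + 1 + 1 := ⟨x₂ - 2, by omega⟩
    rw [pow_succ, mul_comm] at hx
    have hx' := Nat.eq_of_mul_eq_mul_left (by omega) hx
    have hdvd : a ∣ 3 ^ (i * 2) := by rw [pow_mul, ← hx']; exact dvd_pow_self a (by omega)
    obtain ⟨t, -, ht⟩ := (Nat.dvd_prime_pow Nat.prime_three).1 hdvd
    have : t < 2 := by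
      by_contra h
      apply h9
      rw [ht]
      exact pow_dvd_pow 3 (by omega : 2 ≤ t)
    interval_cases t <;> omega
  subst ha
  have eU : seqU ((3 : ℕ) : ℤ) ((b ^ y₁ : ℕ) : ℤ) 1 = 3 - 3 * ((b ^ y₁ : ℕ) : ℤ) := by
    rw [seqU_succ, seqU_zero, seqV_zero]; push_cast; ring
  have eV : seqV ((3 : ℕ) : ℤ) ((b ^ y₁ : ℕ) : ℤ) 1 = 9 - ((b ^ y₁ : ℕ) : ℤ) := by
    rw [seqV_succ, seqU_zero, seqV_zero]; push_cast; ring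
  rw [eU] at hU
  rw [eV] at hV
  have h10 : b ^ y₁ = 10 := by
    obtain ⟨j, rfl⟩ : ∃ j, i = j + 2 := ⟨i - 2, by omega⟩
    rw [pow_add] at hU
    generalize 3 ^ j = t at hU
    generalize b ^ y₁ = s at hU hV
    omega
  have hb : b = 10 := by
    by_cases hy : y₁ = 1
    · rw [hy, pow_one] at h10; exact h10
    · exfalso
      have hd : b ^ 2 ∣ 10 := by rw [← h10]; exact pow_dvd_pow b (by omega)
      have : b ^ 2 ≤ 10 := Nat.le_of_dvd (by norm_num) hd
      have : b ≤ 3 := by nlinarith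
      interval_cases b <;> norm_num at hd
  refine ⟨rfl, hb, ?_⟩
  rw [h10] at heq₁
  have : c ∣ 13 := by
    rw [show 13 = c ^ z₁ by omega]; exact dvd_pow_self c (by omega)
  exact (Nat.prime_dvd_prime_iff_eq hc (by norm_num)).1 this

lemma except' (a b c x₁ y₁ z₁ x₂ y₂ : ℕ) (ha1 : 1 < a) (hb1 : 1 < b) (hc : Nat.Prime c)
    (h1 : (a, b, c) ≠ (3, 10, 13)) (h2 : (a, b, c) ≠ (10, 3, 13))
    (hx₁ : 0 < x₁) (hy₁ : 0 < y₁) (hz₁ : 0 < z₁)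
    (heq₁ : a ^ x₁ + b ^ y₁ = c ^ z₁) (G H : ℤ) (hG : (a : ℤ) ^ x₁ = G) (hH : (b : ℤ) ^ y₁ = H)
    (hx : (a : ℤ) ^ x₂ = G * seqU G H 1 ^ 2) (hy : (b : ℤ) ^ y₂ = H * seqV G H 1 ^ 2)
    (h : (¬ (9 : ℤ) ∣ G ∧ (3 : ℤ) ∣ G ∧ (∃ i, 2 ≤ i ∧ (seqU G H 1).natAbs = 3 ^ i) ∧
        (seqV G H 1).natAbs = 1) ∨
      (¬ (9 : ℤ) ∣ H ∧ (3 : ℤ) ∣ H ∧ (∃ i, 2 ≤ i ∧ (seqV G H 1).natAbs = 3 ^ i) ∧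
        (seqU G H 1).natAbs = 1)) : False := by
  have hG' : ((a ^ x₁ : ℕ) : ℤ) = G := by rw [← hG]; push_cast; rfl
  have hH' : ((b ^ y₁ : ℕ) : ℤ) = H := by rw [← hH]; push_cast; rfl
  rcases h with ⟨h9, h3, ⟨i, hi, hU⟩, hV⟩ | ⟨h9, h3, ⟨i, hi, hU⟩, hV⟩
  · have := except a b c x₁ y₁ z₁ x₂ i ha1 hb1 hc hx₁ hy₁ hz₁ heq₁
      (by rw [← hG'] at h9; exact_mod_cast h9) (by rw [← hG'] at h3; exact_mod_cast h3) hi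
      (by rw [hG', hH']; exact hU) (by rw [hG', hH']; exact hV)
      (by rw [← hU]; zify; rw [sq_abs, hx, hG])
    apply h1
    rw [this.1, this.2.1, this.2.2]
  · have := except b a c y₁ x₁ z₁ y₂ i hb1 ha1 hc hy₁ hx₁ hz₁ (by rw [add_comm]; exact heq₁)
      (by rw [← hH'] at h9; exact_mod_cast h9) (by rw [← hH'] at h3; exact_mod_cast h3) hi
      (by rw [hG', hH', seq_swapU]; exact hU) (by rw [hG', hH', seq_swapV]; exact hV)
      (by rw [← hU]; zify; rw [sq_abs, hy, hH])
    apply h2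
    rw [this.1, this.2.1, this.2.2]

lemma one_lt_mul_sq (A u : ℤ) (hA : 1 < A) (hu : u ≠ 0) : 1 < A * u ^ 2 := by
  have : 0 < u ^ 2 := by positivity
  nlinarith

lemma par_split (x₁ x₂ : ℕ) (h₁ : 0 < x₁) (h₂ : 0 < x₂) (h : x₁ % 2 = x₂ % 2) :
    ∃ p m₁ m₂, p ≠ 0 ∧ x₁ = p + m₁ * 2 ∧ x₂ = p + m₂ * 2 :=
  ⟨2 - x₁ % 2, (x₁ - 1) / 2, (x₂ - 1) / 2, by omega, by omega, by omega⟩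



/-- Lemma 2.1: for `c` an odd prime and `(a,b,c)` not `(3,10,13)` or `(10,3,13)`,
there is at most one solution of `a^x + b^y = c^z` in each parity class. -/
theorem stmt_6 (a b c : ℕ) (hab : Nat.Coprime a b) (hac : Nat.Coprime a c)
    (hbc : Nat.Coprime b c) (ha1 : 1 < a) (hb1 : 1 < b) (hc1 : 1 < c)
    (hc : Nat.Prime c) (hcodd : Odd c)
    (h1 : (a, b, c) ≠ (3, 10, 13)) (h2 : (a, b, c) ≠ (10, 3, 13))
    (x₁ y₁ z₁ x₂ y₂ z₂ : ℕ)
    (hx₁ : 0 < x₁) (hy₁ : 0 < y₁) (hz₁ : 0 < z₁)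
    (hx₂ : 0 < x₂) (hy₂ : 0 < y₂) (hz₂ : 0 < z₂)
    (heq₁ : a ^ x₁ + b ^ y₁ = c ^ z₁) (heq₂ : a ^ x₂ + b ^ y₂ = c ^ z₂)
    (hxpar : x₁ % 2 = x₂ % 2) (hypar : y₁ % 2 = y₂ % 2) :
    (x₁, y₁, z₁) = (x₂, y₂, z₂) := by
  classical
  obtain ⟨p, m₁, m₂, hp, ex₁, ex₂⟩ := par_split x₁ x₂ hx₁ hx₂ hxpar
  obtain ⟨q, n₁, n₂, hq, ey₁, ey₂⟩ := par_split y₁ y₂ hy₁ hy₂ hypar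
  have hcp : Prime (c : ℤ) := Nat.prime_iff_prime_int.1 hc
  have hc0 : (0 : ℤ) < c := by omega
  have hc2 : ¬ (c : ℤ) ∣ 2 := by
    intro h
    have h' : c ∣ 2 := by exact_mod_cast h
    have := Nat.le_of_dvd (by norm_num) h'
    obtain ⟨t, ht⟩ := hcodd
    omega
  have hca : ¬ (c : ℤ) ∣ a := by
    intro h
    have h' : c ∣ a := by exact_mod_cast h
    have := Nat.Coprime.eq_one_of_dvd hac.symm h'
    omega
  have hcb : ¬ (c : ℤ) ∣ b := by
    intro h
    have h' : c ∣ b := by exact_mod_cast h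
    have := Nat.Coprime.eq_one_of_dvd hbc.symm h'
    omega
  have ha1' : (1 : ℤ) < a := by omega
  have hb1' : (1 : ℤ) < b := by omega
  set A : ℤ := (a : ℤ) ^ p with hAdef
  set B : ℤ := (b : ℤ) ^ q with hBdef
  have hA1 : 1 < A := one_lt_pow₀ ha1' hp
  have hB1 : 1 < B := one_lt_pow₀ hb1' hq
  have hA : ¬ (c : ℤ) ∣ A := fun h => hca (hcp.dvd_of_dvd_pow h)
  have hB : ¬ (c : ℤ) ∣ B := fun h => hcb (hcp.dvd_of_dvd_pow h)
  have eA₁ : (a : ℤ) ^ x₁ = A * ((a : ℤ) ^ m₁) ^ 2 := by rw [ex₁, pow_add, pow_mul]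
  have eA₂ : (a : ℤ) ^ x₂ = A * ((a : ℤ) ^ m₂) ^ 2 := by rw [ex₂, pow_add, pow_mul]
  have eB₁ : (b : ℤ) ^ y₁ = B * ((b : ℤ) ^ n₁) ^ 2 := by rw [ey₁, pow_add, pow_mul]
  have eB₂ : (b : ℤ) ^ y₂ = B * ((b : ℤ) ^ n₂) ^ 2 := by rw [ey₂, pow_add, pow_mul]
  have s₁ : A * ((a : ℤ) ^ m₁) ^ 2 + B * ((b : ℤ) ^ n₁) ^ 2 = (c : ℤ) ^ z₁ := by
    rw [← eA₁, ← eB₁]; exact_mod_cast heq₁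
  have s₂ : A * ((a : ℤ) ^ m₂) ^ 2 + B * ((b : ℤ) ^ n₂) ^ 2 = (c : ℤ) ^ z₂ := by
    rw [← eA₂, ← eB₂]; exact_mod_cast heq₂
  have w₁ : ¬ (c : ℤ) ∣ (a : ℤ) ^ m₁ := fun h => hca (hcp.dvd_of_dvd_pow h)
  have w₂ : ¬ (c : ℤ) ∣ (a : ℤ) ^ m₂ := fun h => hca (hcp.dvd_of_dvd_pow h)
  have hex : ∃ z : ℕ, z ≠ 0 ∧ ∃ u v : ℤ, ¬ (c : ℤ) ∣ u ∧ A * u ^ 2 + B * v ^ 2 = (c : ℤ) ^ z :=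
    ⟨z₁, hz₁.ne', _, _, w₁, s₁⟩
  obtain ⟨hz0, u0, v0, hu0, h0⟩ := Nat.find_spec hex
  have hmin : ∀ z : ℕ, z ≠ 0 →
      (∃ u v : ℤ, ¬ (c : ℤ) ∣ u ∧ A * u ^ 2 + B * v ^ 2 = (c : ℤ) ^ z) → Nat.find hex ≤ z :=
    fun z hz h => Nat.find_min' hex ⟨hz, h⟩
  generalize Nat.find hex = z0 at hz0 h0 hmin
  have gen := generate A B c u0 v0 z0 hcp hc0 hc2 hz0 hA1 hB1 hA hB hu0 h0 hmin
  obtain ⟨k₁, a₁, b₁⟩ := gen z₁ hz₁.ne' _ _ w₁ s₁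
  obtain ⟨k₂, a₂, b₂⟩ := gen z₂ hz₂.ne' _ _ w₂ s₂
  set G := A * u0 ^ 2 with hG
  set H := B * v0 ^ 2 with hH
  have fa₁ : (a : ℤ) ^ x₁ = G * seqU G H k₁ ^ 2 := by rw [eA₁, a₁, mul_pow, ← mul_assoc]
  have fa₂ : (a : ℤ) ^ x₂ = G * seqU G H k₂ ^ 2 := by rw [eA₂, a₂, mul_pow, ← mul_assoc]
  have fb₁ : (b : ℤ) ^ y₁ = H * seqV G H k₁ ^ 2 := by rw [eB₁, b₁, mul_pow, ← mul_assoc]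
  have fb₂ : (b : ℤ) ^ y₂ = H * seqV G H k₂ ^ 2 := by rw [eB₂, b₂, mul_pow, ← mul_assoc]
  have hG1 : 1 < G := by
    have hne : u0 ≠ 0 := fun h => hu0 (by rw [h]; exact dvd_zero _)
    exact one_lt_mul_sq A u0 hA1 hne
  have hH1 : 1 < H := by
    have hne : v0 ≠ 0 := by
      intro h
      rw [hH, h] at fb₁
      have : (0 : ℤ) < (b : ℤ) ^ y₁ := by positivity
      rw [fb₁] at this
      norm_num at this
    exact one_lt_mul_sq B v0 hB1 hne
  have hcop : IsCoprime G H := by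
    have h : IsCoprime ((a : ℤ) ^ x₁) ((b : ℤ) ^ y₁) := (Nat.isCoprime_iff_coprime.2 hab).pow
    exact (h.of_isCoprime_of_dvd_left ⟨_, fa₁⟩).of_isCoprime_of_dvd_right ⟨_, fb₁⟩
  have dU : ∀ (x k : ℕ), (a : ℤ) ^ x = G * seqU G H k ^ 2 →
      ∀ r : ℕ, r.Prime → (r : ℤ) ∣ seqU G H k → (r : ℤ) ∣ G := by
    intro x k hx r hr hd
    have h : (r : ℤ) ∣ (a : ℤ) ^ x := by
      rw [hx]; exact (dvd_pow hd two_ne_zero).mul_left _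
    exact (dvd_pow ((Nat.prime_iff_prime_int.1 hr).dvd_of_dvd_pow h) hp).mul_right _
  have dV : ∀ (y k : ℕ), (b : ℤ) ^ y = H * seqV G H k ^ 2 →
      ∀ r : ℕ, r.Prime → (r : ℤ) ∣ seqV G H k → (r : ℤ) ∣ H := by
    intro y k hy r hr hd
    have h : (r : ℤ) ∣ (b : ℤ) ^ y := by
      rw [hy]; exact (dvd_pow hd two_ne_zero).mul_left _
    exact (dvd_pow ((Nat.prime_iff_prime_int.1 hr).dvd_of_dvd_pow h) hq).mul_right _
  have fin₁ := fun h => final_K G H hG1 hH1 hcop k₁ h (dU _ _ fa₁) (dV _ _ fb₁)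
  have fin₂ := fun h => final_K G H hG1 hH1 hcop k₂ h (dU _ _ fa₂) (dV _ _ fb₂)
  by_cases hk : k₁ = k₂
  · subst hk
    have hx : x₁ = x₂ := by
      have : a ^ x₁ = a ^ x₂ := by exact_mod_cast fa₁.trans fa₂.symm
      exact Nat.pow_right_injective ha1 this
    have hy : y₁ = y₂ := by
      have : b ^ y₁ = b ^ y₂ := by exact_mod_cast fb₁.trans fb₂.symm
      exact Nat.pow_right_injective hb1 this
    have hz : z₁ = z₂ := by
      have : c ^ z₁ = c ^ z₂ := by rw [← heq₁, ← heq₂, hx, hy]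
      exact Nat.pow_right_injective hc1 this
    rw [hx, hy, hz]
  · exfalso
    by_cases hk1 : k₁ = 0
    · obtain ⟨e, hh⟩ := fin₂ (by omega)
      rw [hk1, seqU_zero, one_pow, mul_one] at fa₁
      rw [hk1, seqV_zero, one_pow, mul_one] at fb₁
      rw [e] at fa₂ fb₂
      exact except' a b c x₁ y₁ z₁ x₂ y₂ ha1 hb1 hc h1 h2 hx₁ hy₁ hz₁ heq₁ G H fa₁ fb₁ fa₂ fb₂ hh
    · obtain ⟨e, hh⟩ := fin₁ hk1
      have hk2 : k₂ = 0 := by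
        by_contra h
        have := (fin₂ h).1
        omega
      rw [hk2, seqU_zero, one_pow, mul_one] at fa₂
      rw [hk2, seqV_zero, one_pow, mul_one] at fb₂
      rw [e] at fa₁ fb₁
      exact except' a b c x₂ y₂ z₂ x₁ y₁ ha1 hb1 hc h1 h2 hx₂ hy₂ hz₂ heq₂ G H fa₂ fb₂ fa₁ fb₁ hh
end

section
/- If $(x,y,z,n)$ is a solution in positive integers of the equation $3^x + 2^y = n^z$ with $z > 1$, then $(x,y,z,n) = (2,4,2,5)$, i.e. the only such solution is $3^2 + 2^4 = 5^2$. -/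
/-- `(a√r + b√-s)^(2k+1) = aP√r + bQ√-s` with `R = ra²`, `S = sb²`: the coefficients `P`, `Q`. -/
lemma pq_exists (R S : ℤ) (hodd : (R + S) % 2 = 1) (k : ℕ) : ∃ P Q : ℤ,
    R * P ^ 2 + S * Q ^ 2 = (R + S) ^ (2 * k + 1) ∧ P % 2 = 1 ∧ Q % 2 = 1 ∧
    (R + S ∣ P + Q - 2 * (-4 * S) ^ k) ∧
    (3 ∣ R → (3 ∣ P - (2 * k + 1) * (-S) ^ k) ∧ 3 ∣ Q - (-S) ^ k) ∧
    (3 ∣ R - 1 → 3 ∣ S - 1 → ¬ 3 ∣ P ∧ ¬ 3 ∣ Q) := by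
  induction k with
  | zero => exact ⟨1, 1, by ring, by norm_num, by norm_num, by simp, by simp, by norm_num⟩
  | succ k ih =>
    obtain ⟨P, Q, h1, h2, h3, ⟨c, h4⟩, h5, h6⟩ := ih
    have hRS : (R - S) % 2 = 1 := by omega
    refine ⟨P * (R - S) - 2 * S * Q, Q * (R - S) + 2 * R * P, ?_, ?_, ?_, ?_, ?_, ?_⟩
    · have : (R + S) ^ (2 * (k + 1) + 1) = (R + S) ^ (2 * k + 1) * (R + S) ^ 2 := by ring
      rw [this, ← h1]; ring
    · have : (P * (R - S)) % 2 = 1 := by rw [Int.mul_emod, h2, hRS]; rfl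
      rw [mul_assoc]; omega
    · have : (Q * (R - S)) % 2 = 1 := by rw [Int.mul_emod, h3, hRS]; rfl
      rw [mul_assoc]; omega
    · refine ⟨-4 * S * c + P * 3 + Q, ?_⟩
      have : (-4 * S) ^ (k + 1) = (-4 * S) ^ k * (-4 * S) := by ring
      rw [this]
      linear_combination (-4 * S) * h4
    · intro hR
      obtain ⟨⟨u, hu⟩, ⟨v, hv⟩⟩ := h5 hR
      obtain ⟨w, hw⟩ := hR
      have : (-S) ^ (k + 1) = (-S) ^ k * (-S) := by ring
      rw [this]
      refine ⟨⟨w * P - S * u - 2 * S * v, ?_⟩, ⟨w * Q - S * v + 2 * w * P, ?_⟩⟩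
      · push_cast
        linear_combination P * hw - S * hu - 2 * S * hv
      · linear_combination Q * hw - S * hv + 2 * P * hw
    · intro hR hS
      obtain ⟨h7, h8⟩ := h6 hR hS
      obtain ⟨u, hu⟩ := hR
      obtain ⟨v, hv⟩ := hS
      constructor
      · rintro ⟨w, hw⟩
        apply h8
        refine ⟨w - P * (u - v) + 2 * v * Q + Q, ?_⟩
        linear_combination hw - P * hu + P * hv + 2 * Q * hv
      · rintro ⟨w, hw⟩
        apply h7
        refine ⟨-w + Q * (u - v) + 2 * u * P + P, ?_⟩
        linear_combination -hw + Q * hu - Q * hv + 2 * P * hu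

lemma core (r s a b X Y n : ℤ) (k : ℕ) (hr : 0 < r) (hs : 0 < s) (hn : 0 < n)
    (hab : r * a ^ 2 + s * b ^ 2 = n) (hXY : r * X ^ 2 + s * Y ^ 2 = n ^ (2 * k + 1))
    (h2 : IsCoprime n 2) (cr : IsCoprime n r) (cs : IsCoprime n s) (cX : IsCoprime n X)
    (cY : IsCoprime n Y) (hd : n ∣ a * Y - b * X)
    (hpar : 2 ≤ r * s ∨ (Even b ∧ Even Y)) (P Q : ℤ)
    (h1 : (r * a ^ 2) * P ^ 2 + (s * b ^ 2) * Q ^ 2 = n ^ (2 * k + 1))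
    (h4 : n ∣ P + Q - 2 * (-4 * (s * b ^ 2)) ^ k) :
    X ^ 2 = (a * P) ^ 2 ∧ Y ^ 2 = (b * Q) ^ 2 := by
  have cb : IsCoprime n b := by
    obtain ⟨m, hm⟩ := hd
    have : n * Y ^ 2 = n * (b * (b * n ^ (2 * k) + 2 * r * X * m) + n * (r * m ^ 2)) := by
      have e : n ^ (2 * k + 1) = n * n ^ (2 * k) := by ring
      rw [e] at hXY
      have ha : a * Y = b * X + n * m := by linarith
      have : r * (a * Y) ^ 2 + s * b ^ 2 * Y ^ 2 = n * Y ^ 2 := by rw [← hab]; ring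
      rw [← this, ha]
      linear_combination b ^ 2 * hXY
    have this := mul_left_cancel₀ hn.ne' this
    have c2 : IsCoprime n (Y ^ 2) := cY.pow_right
    rw [this] at c2
    have c3 := (IsCoprime.add_mul_left_right_iff (x := n) (z := r * m ^ 2)).1 c2
    exact c3.of_mul_right_left
  have cW : IsCoprime n (a * P * Y + b * Q * X) := by
    obtain ⟨m, hm⟩ := hd
    obtain ⟨c, hc⟩ := h4
    have e : a * P * Y + b * Q * X = b * X * (2 * (-4 * (s * b ^ 2)) ^ k) + n * (m * P + b * X * c) := by
      linear_combination P * hm + b * X * hc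
    rw [e]
    refine (IsCoprime.add_mul_left_right_iff).2 ?_
    refine (cb.mul_right cX).mul_right (h2.mul_right (IsCoprime.pow_right ?_))
    refine IsCoprime.mul_right ?_ (cs.mul_right cb.pow_right)
    have : (-4 : ℤ) = -(2 * 2) := by norm_num
    rw [this]
    exact (h2.mul_right h2).neg_right
  have hW : n ^ (2 * k + 1) ∣ a * P * Y - b * Q * X := by
    have h : n ^ (2 * k + 1) ∣ (r * (a * P * Y + b * Q * X)) * (a * P * Y - b * Q * X) := by
      refine ⟨Y ^ 2 - b ^ 2 * Q ^ 2, ?_⟩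
      linear_combination Y ^ 2 * h1 - b ^ 2 * Q ^ 2 * hXY
    exact (IsCoprime.pow_left (cr.mul_right cW)).dvd_of_dvd_mul_left h
  obtain ⟨w, hw⟩ := hW
  have hN : 0 < n ^ (2 * k + 1) := pow_pos hn _
  set N := n ^ (2 * k + 1) with hNdef
  have hU : (r * (a * P) * X + s * (b * Q) * Y) ^ 2 + r * s * (N * w) ^ 2 = N ^ 2 := by
    rw [← hw]
    have : N ^ 2 = (r * a ^ 2 * P ^ 2 + s * b ^ 2 * Q ^ 2) * (r * X ^ 2 + s * Y ^ 2) := by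
      rw [h1, hXY]; ring
    rw [this]; ring
  have hw1 : r * s * w ^ 2 ≤ 1 := by
    have : N ^ 2 * (r * s * w ^ 2) ≤ N ^ 2 * 1 := by
      nlinarith [sq_nonneg (r * (a * P) * X + s * (b * Q) * Y)]
    exact le_of_mul_le_mul_left this (by positivity)
  have hw0 : w = 0 := by
    by_contra hne
    have hpos : 1 ≤ w ^ 2 := by
      have : 0 < w ^ 2 := by positivity
      omega
    rcases hpar with h | ⟨hb, hY⟩
    · nlinarith
    · have hrs : 1 ≤ r * s := by nlinarith
      have hw2 : w ^ 2 ≤ 1 := by nlinarith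
      have hev : Even (N * w) := by
        rw [← hw]
        exact (hY.mul_left _).sub ((hb.mul_right _).mul_right _)
      have hnE : ¬ Even N := by
        intro hE
        have : Even n := (Int.even_pow.1 hE).1
        have := h2.isUnit_of_dvd' this.two_dvd (dvd_refl 2)
        rw [Int.isUnit_iff] at this; omega
      rcases Int.even_mul.1 hev with h | ⟨t, ht⟩
      · exact hnE h
      · have : t ≠ 0 := by rintro rfl; simp at ht; exact hne ht
        have : 0 < t ^ 2 := by positivity
        rw [ht] at hw2
        nlinarith
  rw [hw0, mul_zero] at hw
  have hw' : a * P * Y = b * Q * X := by linarith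
  constructor
  · apply mul_left_cancel₀ hN.ne'
    have : (a * P * Y) ^ 2 = (b * Q * X) ^ 2 := by rw [hw']
    linear_combination -X ^ 2 * h1 + (a * P) ^ 2 * hXY - s * this
  · apply mul_left_cancel₀ hN.ne'
    have : (a * P * Y) ^ 2 = (b * Q * X) ^ 2 := by rw [hw']
    linear_combination -Y ^ 2 * h1 + (b * Q) ^ 2 * hXY + r * this

lemma core2 (r s a b n : ℤ) (k m l : ℕ) (hr : r = 1 ∨ r = 3) (hs : s = 1 ∨ s = 2) (hn : 1 < n)
    (hk : 1 ≤ k) (h3k : ¬ 3 ∣ 2 * k + 1)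
    (hab : r * a ^ 2 + s * b ^ 2 = n)
    (hXY : r * (3 ^ m) ^ 2 + s * (2 ^ l) ^ 2 = n ^ (2 * k + 1))
    (h3r : 3 ∣ r * (3 ^ m) ^ 2)
    (h2 : IsCoprime n 2) (h3 : IsCoprime n 3)
    (hd : n ∣ a * 2 ^ l - b * 3 ^ m)
    (hpar : 2 ≤ r * s ∨ (Even b ∧ Even ((2 : ℤ) ^ l))) : False := by
  have hn2 : n % 2 = 1 := by
    by_contra h
    have : (2 : ℤ) ∣ n := by omega
    have := h2.isUnit_of_dvd' this (dvd_refl 2)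
    rw [Int.isUnit_iff] at this; omega
  have hn3 : ¬ (3 : ℤ) ∣ n := by
    intro h
    have := h3.isUnit_of_dvd' h (dvd_refl 3)
    rw [Int.isUnit_iff] at this; omega
  have p3 : Prime (3 : ℤ) := Int.prime_three
  have p2 : Prime (2 : ℤ) := Int.prime_two
  obtain ⟨P, Q, h1, hP, hQ, h4, h5, h6⟩ := pq_exists (r * a ^ 2) (s * b ^ 2) (by rw [hab]; exact hn2) k
  rw [hab] at h1 h4
  have cr : IsCoprime n r := by
    rcases hr with rfl | rfl
    · exact isCoprime_one_right
    · exact h3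
  have cs : IsCoprime n s := by
    rcases hs with rfl | rfl
    · exact isCoprime_one_right
    · exact h2
  obtain ⟨hX, hY⟩ := core r s a b (3 ^ m) (2 ^ l) n k (by omega) (by omega) (by omega) hab hXY h2 cr cs
    h3.pow_right h2.pow_right hd hpar P Q h1 h4
  have hQ1 : Q ^ 2 = 1 := by
    have hdv : Q ∣ 2 ^ (l * 2) := by
      rw [pow_mul, hY]; exact (Dvd.intro_left b rfl).trans (Dvd.intro_left _ (sq _).symm)
    obtain ⟨i, -, hi⟩ := (dvd_prime_pow p2 _).1 hdv
    have hi0 : i = 0 := by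
      by_contra hi0
      have : (2 : ℤ) ∣ Q := (dvd_pow_self 2 hi0).trans hi.symm.dvd
      omega
    rw [hi0, pow_zero] at hi
    rcases Int.isUnit_iff.1 (associated_one_iff_isUnit.1 hi) with h | h <;> rw [h] <;> norm_num
  rw [mul_pow, hQ1, mul_one] at hY
  have hS3 : ¬ (3 : ℤ) ∣ s * b ^ 2 := by
    rw [← hY]
    intro h
    rcases p3.dvd_or_dvd h with h | h
    · omega
    · have := p3.dvd_of_dvd_pow (p3.dvd_of_dvd_pow h)
      omega
  have hR3 : (3 : ℤ) ∣ r * a ^ 2 := by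
    by_contra hR
    rcases hr with rfl | rfl
    · rw [one_mul] at *
      have ha : (3 : ℤ) ∣ a ^ 2 - 1 := by
        have : ¬ (3 : ℤ) ∣ a := fun h => hR (h.trans (Dvd.intro_left _ (sq _).symm))
        have : a % 3 = 1 ∨ a % 3 = 2 := by omega
        rcases this with h | h <;> apply Int.dvd_of_emod_eq_zero <;>
          simp [Int.sub_emod, pow_two, Int.mul_emod, h]
      have hb : (3 : ℤ) ∣ s * b ^ 2 - 1 := by
        have hcase : s * b ^ 2 % 3 = 0 ∨ s * b ^ 2 % 3 = 1 ∨ s * b ^ 2 % 3 = 2 := by omega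
        rcases hcase with h | h | h
        · exact absurd (Int.dvd_of_emod_eq_zero h) hS3
        · omega
        · exact absurd (by omega : (3 : ℤ) ∣ n) hn3
      have h7 := (h6 ha hb).1
      rw [hX] at h3r
      have h8 := p3.dvd_of_dvd_pow h3r
      rcases p3.dvd_or_dvd h8 with h | h
      · exact hR (h.trans (Dvd.intro_left _ (sq _).symm))
      · exact h7 h
    · exact hR (Dvd.intro _ rfl)
  have hP3 : ¬ (3 : ℤ) ∣ P := by
    intro h
    have h7 := (h5 hR3).1
    have h8 : (3 : ℤ) ∣ (2 * k + 1) * (-(s * b ^ 2)) ^ k := by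
      have := dvd_sub h h7
      simpa using this
    rcases p3.dvd_or_dvd h8 with h | h
    · apply h3k; omega
    · have := p3.dvd_of_dvd_pow h
      exact hS3 ((dvd_neg).1 this)
  have hP1 : P ^ 2 = 1 := by
    have hdv : P ∣ 3 ^ (m * 2) := by
      rw [pow_mul, hX]; exact (Dvd.intro_left a rfl).trans (Dvd.intro_left _ (sq _).symm)
    obtain ⟨i, -, hi⟩ := (dvd_prime_pow p3 _).1 hdv
    have hi0 : i = 0 := by
      by_contra hi0
      have : (3 : ℤ) ∣ P := (dvd_pow_self 3 hi0).trans hi.symm.dvd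
      exact hP3 this
    rw [hi0, pow_zero] at hi
    rcases Int.isUnit_iff.1 (associated_one_iff_isUnit.1 hi) with h | h <;> rw [h] <;> norm_num
  rw [hP1, hQ1, mul_one, mul_one, hab] at h1
  have : n ^ 1 < n ^ (2 * k + 1) := pow_lt_pow_right₀ hn (by omega)
  rw [pow_one] at this
  omega

lemma thue (n : ℕ) (hn : 0 < n) (hsq : ¬ ∃ m, n = m ^ 2) (X Y : ℤ) :
    ∃ a b : ℤ, (a ≠ 0 ∨ b ≠ 0) ∧ a ^ 2 < n ∧ b ^ 2 < n ∧ (n : ℤ) ∣ a * Y - b * X := by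
  have : NeZero n := ⟨hn.ne'⟩
  set q := Nat.sqrt n with hq
  have hq1 : n < (q + 1) * (q + 1) := Nat.lt_succ_sqrt n
  have hq2 : q * q ≤ n := Nat.sqrt_le n
  have hq3 : q * q < n := lt_of_le_of_ne hq2 (fun h => hsq ⟨q, by rw [← h]; ring⟩)
  obtain ⟨u, v, huv, he⟩ := Fintype.exists_ne_map_eq_of_card_lt
    (fun u : Fin (q + 1) × Fin (q + 1) => (((u.1 : ℕ) * Y - (u.2 : ℕ) * X : ℤ) : ZMod n))
    (by simpa [ZMod.card] using hq1)
  have hb : ∀ i j : Fin (q + 1), (((i : ℕ) : ℤ) - ((j : ℕ) : ℤ)) ^ 2 < n := by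
    intro i j
    have hi := i.2
    have hj := j.2
    have h1 : |((i : ℕ) : ℤ) - ((j : ℕ) : ℤ)| ≤ q := by
      rw [abs_le]; constructor <;> omega
    have h2 : (((i : ℕ) : ℤ) - ((j : ℕ) : ℤ)) ^ 2 ≤ (q : ℤ) ^ 2 := by
      rw [← sq_abs]; gcongr
    have h3 : (q : ℤ) * q < n := by exact_mod_cast hq3
    nlinarith
  refine ⟨(u.1 : ℕ) - (v.1 : ℕ), (u.2 : ℕ) - (v.2 : ℕ), ?_, hb _ _, hb _ _, ?_⟩
  · by_contra h
    push Not at h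
    apply huv
    ext
    · have := h.1; omega
    · have := h.2; omega
  · have := (ZMod.intCast_eq_intCast_iff_dvd_sub _ _ _).1 he.symm
    convert this using 1
    ring

lemma cube_aux : ∀ b < 36, ∀ a < 36,
    (((3 ^ a + 2 ^ b) ^ 2 % 7 ≤ 1 ∧ (3 ^ a + 2 ^ b) ^ 4 % 13 ≤ 1) ∧
      (3 ^ a + 2 ^ b) ^ 6 % 19 ≤ 1 ∧ (3 ^ a + 2 ^ b) ^ 12 % 37 ≤ 1) ∧
      (3 ^ a + 2 ^ b) ^ 24 % 73 ≤ 1 → b % 3 ≠ 0 ∧ (a = 1 → b % 6 = 2) := by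
  decide +kernel

lemma fermat_aux (p : ℕ) (hp : p.Prime) (n : ℕ) : n ^ (p - 1) % p ≤ 1 := by
  have := Fact.mk hp
  by_cases h : (n : ZMod p) = 0
  · have : p ∣ n := (ZMod.natCast_eq_zero_iff _ _).1 h
    have h2 : p ∣ n ^ (p - 1) := this.trans (dvd_pow_self _ (by have := hp.two_le; omega))
    rw [Nat.mod_eq_zero_of_dvd h2]; omega
  · have h1 := ZMod.pow_card_sub_one_eq_one h
    have h2 : ((n ^ (p - 1) : ℕ) : ZMod p) = ((1 : ℕ) : ZMod p) := by push_cast; exact h1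
    have h3 := (ZMod.natCast_eq_natCast_iff' _ _ _).1 h2
    rw [h3]; exact Nat.mod_le _ _

lemma period_aux (p : ℕ) (h3 : 3 ^ 36 % p = 1 % p) (h2 : 2 ^ 36 % p = 1 % p) (x y e : ℕ) :
    (3 ^ (x % 36) + 2 ^ (y % 36)) ^ e % p = (3 ^ x + 2 ^ y) ^ e % p := by
  have key : ∀ c x : ℕ, c ^ 36 % p = 1 % p → c ^ (x % 36) ≡ c ^ x [MOD p] := by
    intro c x hc
    conv_rhs => rw [← Nat.mod_add_div x 36, pow_add, pow_mul]
    have : c ^ 36 ≡ 1 [MOD p] := hc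
    simpa using ((this.pow (x / 36)).mul_left (c ^ (x % 36))).symm
  exact ((key 3 x h3).add (key 2 y h2)).pow e

lemma cube_case (x y n : ℕ) (hx : 0 < x) (h : 3 ^ x + 2 ^ y = n ^ 3) : False := by
  have key : ∀ p : ℕ, p.Prime → 3 ^ 36 % p = 1 % p → 2 ^ 36 % p = 1 % p → ∀ e, 3 * e = p - 1 →
      (3 ^ (x % 36) + 2 ^ (y % 36)) ^ e % p ≤ 1 := by
    intro p hp h3 h2 e he
    rw [period_aux p h3 h2, h, ← pow_mul, he]
    exact fermat_aux p hp n
  have hA := cube_aux (y % 36) (Nat.mod_lt _ (by norm_num)) (x % 36) (Nat.mod_lt _ (by norm_num))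
    ⟨⟨⟨key 7 (by norm_num) (by norm_num) (by norm_num) 2 (by norm_num),
      key 13 (by norm_num) (by norm_num) (by norm_num) 4 (by norm_num)⟩,
      key 19 (by norm_num) (by norm_num) (by norm_num) 6 (by norm_num),
      key 37 (by norm_num) (by norm_num) (by norm_num) 12 (by norm_num)⟩,
      key 73 (by norm_num) (by norm_num) (by norm_num) 24 (by norm_num)⟩
  have hc : n ^ 3 % 9 = 0 ∨ n ^ 3 % 9 = 1 ∨ n ^ 3 % 9 = 8 := by
    have : n % 9 < 9 := Nat.mod_lt _ (by norm_num)
    rw [Nat.pow_mod]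
    interval_cases n % 9 <;> simp
  have hy : 2 ^ y % 9 = 2 ^ (y % 6) % 9 := by
    conv_lhs => rw [← Nat.mod_add_div y 6, pow_add, pow_mul, Nat.mul_mod, Nat.pow_mod (2 ^ 6)]
    simp
  have h6 : y % 6 < 6 := Nat.mod_lt _ (by norm_num)
  rw [← h, Nat.add_mod, hy] at hc
  rcases Nat.lt_or_ge x 2 with h1 | h1
  · have hx1 : x = 1 := by omega
    subst hx1
    have := hA.2 rfl
    have : y % 6 = 2 := by omega
    rw [this] at hc
    simp at hc
  · have h9 : 3 ^ x % 9 = 0 := Nat.mod_eq_zero_of_dvd (show 3 ^ 2 ∣ 3 ^ x from pow_dvd_pow 3 h1)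
    rw [h9] at hc
    have := hA.1
    have h7 : y % 6 ≠ 0 ∧ y % 6 ≠ 3 := by omega
    generalize y % 6 = t at *
    interval_cases t <;> simp at hc h7

lemma even_case (x y m : ℕ) (hx : 0 < x) (hy : 0 < y) (h : 3 ^ x + 2 ^ y = m ^ 2) :
    x = 2 ∧ y = 4 ∧ m = 5 := by
  have hye : y % 2 = 0 := by
    by_contra hne
    have h1 : 2 ^ y % 3 = 2 := by
      conv_lhs => rw [← Nat.mod_add_div y 2, pow_add, pow_mul, Nat.mul_mod, Nat.pow_mod (2 ^ 2)]
      have : y % 2 = 1 := by omega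
      simp [this]
    have h2 : 3 ^ x % 3 = 0 := Nat.mod_eq_zero_of_dvd (dvd_pow_self 3 hx.ne')
    have h3 : m ^ 2 % 3 = 2 := by rw [← h]; omega
    have : m % 3 < 3 := Nat.mod_lt _ (by norm_num)
    rw [Nat.pow_mod] at h3
    interval_cases m % 3 <;> simp at h3
  obtain ⟨j, rfl⟩ : ∃ j, y = 2 * j := ⟨y / 2, by omega⟩
  have hj : 1 ≤ j := by omega
  have hx3 : 0 < 3 ^ x := by positivity
  have hlt : 2 ^ j < m := by
    have : (2 ^ j) ^ 2 < m ^ 2 := by rw [← h, ← pow_mul, mul_comm j 2]; omega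
    exact lt_of_pow_lt_pow_left₀ 2 (by omega) this
  obtain ⟨d, rfl⟩ : ∃ d, m = 2 ^ j + d := ⟨m - 2 ^ j, by omega⟩
  have hf : d * (d + 2 * 2 ^ j) = 3 ^ x := by
    have e : 2 ^ (2 * j) = (2 ^ j) ^ 2 := by rw [mul_comm, pow_mul]
    rw [e] at h
    nlinarith
  obtain ⟨i, -, hi⟩ := (Nat.dvd_prime_pow Nat.prime_three).1 (Dvd.intro _ hf)
  obtain ⟨l, -, hl⟩ := (Nat.dvd_prime_pow Nat.prime_three).1 (Dvd.intro_left _ hf)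
  have hpj : 0 < 2 ^ j := by positivity
  have hi0 : i = 0 := by
    by_contra hi0
    have h1 : 3 ∣ d := hi ▸ dvd_pow_self 3 hi0
    have hl0 : l ≠ 0 := by
      rintro rfl
      rw [pow_zero] at hl; omega
    have h2 : 3 ∣ d + 2 * 2 ^ j := hl ▸ dvd_pow_self 3 hl0
    have h3 : 3 ∣ 2 ^ j := by omega
    have := Nat.prime_three.dvd_of_dvd_pow h3
    omega
  rw [hi0, pow_zero] at hi
  subst hi
  rw [one_mul] at hf
  have hxe : x % 2 = 0 := by
    by_contra hne
    have h1 : 3 ^ x % 4 = 3 := by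
      conv_lhs => rw [← Nat.mod_add_div x 2, pow_add, pow_mul, Nat.mul_mod, Nat.pow_mod (3 ^ 2)]
      have : x % 2 = 1 := by omega
      simp [this]
    have h2 : 2 ∣ 2 ^ j := dvd_pow_self 2 (by omega)
    omega
  obtain ⟨g, rfl⟩ : ∃ g, x = 2 * g := ⟨x / 2, by omega⟩
  obtain ⟨t, ht⟩ : ∃ t, 3 ^ g = t + 1 := ⟨3 ^ g - 1, (Nat.succ_pred_eq_of_pos (by positivity)).symm⟩
  have hf2 : t * (t + 2) = 2 ^ (j + 1) := by
    have e : 3 ^ (2 * g) = (3 ^ g) ^ 2 := by rw [mul_comm, pow_mul]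
    rw [e, ht] at hf
    rw [pow_succ]; nlinarith
  obtain ⟨c, -, hc⟩ := (Nat.dvd_prime_pow Nat.prime_two).1 (Dvd.intro _ hf2)
  obtain ⟨e, -, he⟩ := (Nat.dvd_prime_pow Nat.prime_two).1 (Dvd.intro_left _ hf2)
  have hodd : 3 ^ g % 2 = 1 := by rw [Nat.pow_mod]; simp
  have hc1 : c < 2 := by
    by_contra hc2
    have h1 : 2 ^ 2 ∣ t := by rw [hc]; exact pow_dvd_pow 2 (by omega)
    have he2 : 2 ≤ e := by
      by_contra he2
      have : 2 ^ e ≤ 2 ^ 1 := Nat.pow_le_pow_right (by norm_num) (by omega)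
      have : 0 < t := by rw [hc]; positivity
      omega
    have h2 : 2 ^ 2 ∣ t + 2 := by rw [he]; exact pow_dvd_pow 2 he2
    omega
  have ht2 : t = 2 := by
    interval_cases c
    · omega
    · simpa using hc
  subst ht2
  have hg : g = 1 := Nat.pow_right_injective (le_refl 2 |>.trans (by norm_num : 2 ≤ 3)) (by simpa using ht)
  have hj2 : 2 ^ (j + 1) = 2 ^ 3 := by rw [← hf2]; norm_num
  have := Nat.pow_right_injective (le_refl 2) hj2
  have hj3 : j = 2 := by omega
  subst hj3
  subst hg
  norm_num

lemma quot_exists (r s a b X Y : ℤ) (n : ℕ) (k : ℕ) (hr : 0 < r) (hs : 0 < s)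
    (hne : a ≠ 0 ∨ b ≠ 0) (ha : a ^ 2 < n) (hb : b ^ 2 < n) (hd : (n : ℤ) ∣ a * Y - b * X)
    (cY : IsCoprime (n : ℤ) Y)
    (hXY : r * X ^ 2 + s * Y ^ 2 = (n : ℤ) ^ (2 * k + 1)) :
    ∃ q : ℤ, 0 < q ∧ q < r + s ∧ r * a ^ 2 + s * b ^ 2 = q * n := by
  have h : (n : ℤ) ∣ Y ^ 2 * (r * a ^ 2 + s * b ^ 2) := by
    obtain ⟨m, hm⟩ := hd
    refine ⟨b ^ 2 * (n : ℤ) ^ (2 * k) + r * m * (a * Y + b * X), ?_⟩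
    have e : (n : ℤ) ^ (2 * k + 1) = n * (n : ℤ) ^ (2 * k) := by ring
    rw [e] at hXY
    linear_combination b ^ 2 * hXY + r * (a * Y + b * X) * hm
  obtain ⟨q, hq⟩ := (IsCoprime.pow_right cY).dvd_of_dvd_mul_left h
  have hn : (0 : ℤ) < n := by nlinarith [sq_nonneg a]
  have hpos : 0 < r * a ^ 2 + s * b ^ 2 := by
    rcases hne with h | h
    · have : 0 < a ^ 2 := by positivity
      nlinarith [sq_nonneg b, mul_pos hr this, mul_nonneg hs.le (sq_nonneg b)]
    · have : 0 < b ^ 2 := by positivity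
      nlinarith [sq_nonneg b, mul_pos hs this, mul_nonneg hr.le (sq_nonneg a)]
  refine ⟨q, ?_, ?_, by rw [hq]; ring⟩
  · rw [hq] at hpos
    exact pos_of_mul_pos_right hpos hn.le
  · have : (n : ℤ) * q < n * (r + s) := by rw [← hq]; nlinarith
    exact lt_of_mul_lt_mul_left this hn.le

lemma swap_aux (s a b X Y n : ℤ) (k : ℕ) (cY : IsCoprime n Y)
    (hXY : X ^ 2 + s * Y ^ 2 = n ^ (2 * k + 1)) (hd : n ∣ s * a * Y - b * X) (cs : IsCoprime n s) :
    n ∣ b * Y - (-a) * X := by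
  obtain ⟨m, hm⟩ := hd
  have : n ∣ (s * Y) * (b * Y - (-a) * X) := by
    refine ⟨b * n ^ (2 * k) + m * X, ?_⟩
    have e : n ^ (2 * k + 1) = n * n ^ (2 * k) := by ring
    rw [e] at hXY
    linear_combination b * hXY + X * hm
  exact (cs.mul_right cY).dvd_of_dvd_mul_left this

lemma swap_aux2 (s a b X Y n : ℤ) (k : ℕ) (cX : IsCoprime n X)
    (hXY : s * X ^ 2 + Y ^ 2 = n ^ (2 * k + 1)) (hd : n ∣ a * Y - s * b * X) (cs : IsCoprime n s) :
    n ∣ b * Y - (-a) * X := by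
  obtain ⟨m, hm⟩ := hd
  have : n ∣ (s * X) * (b * Y - (-a) * X) := by
    refine ⟨a * n ^ (2 * k) - m * Y, ?_⟩
    have e : n ^ (2 * k + 1) = n * n ^ (2 * k) := by ring
    rw [e] at hXY
    linear_combination a * hXY - Y * hm
  exact (cs.mul_right cX).dvd_of_dvd_mul_left this

lemma even_of_sq (a c : ℤ) (h : a ^ 2 = 2 * c) : ∃ d, a = 2 * d :=
  Int.prime_two.dvd_of_dvd_pow (Dvd.intro _ h.symm)

lemma three_of_sq (a c : ℤ) (h : a ^ 2 = 3 * c) : ∃ d, a = 3 * d :=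
  Int.prime_three.dvd_of_dvd_pow (Dvd.intro _ h.symm)

lemma sq_mod3 (a : ℤ) : a ^ 2 % 3 = 0 ∨ a ^ 2 % 3 = 1 := by
  have : a % 3 = 0 ∨ a % 3 = 1 ∨ a % 3 = 2 := by omega
  rcases this with h | h | h <;> simp [pow_two, Int.mul_emod, h]

lemma sq_mod4 (a : ℤ) : a ^ 2 % 4 = 0 ∨ a ^ 2 % 4 = 1 := by
  have : a % 4 = 0 ∨ a % 4 = 1 ∨ a % 4 = 2 ∨ a % 4 = 3 := by omega
  rcases this with h | h | h | h <;> simp [pow_two, Int.mul_emod, h]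

lemma odd_case (x y n k : ℕ) (hx : 0 < x) (hy : 0 < y) (hk : 1 ≤ k) (h3k : ¬ 3 ∣ 2 * k + 1)
    (hsq : ¬ ∃ m, n = m ^ 2) (h : 3 ^ x + 2 ^ y = n ^ (2 * k + 1)) : False := by
  have hn1 : 1 < n := by
    by_contra hn
    have : n = 0 ∨ n = 1 := by omega
    rcases this with rfl | rfl
    · exact hsq ⟨0, rfl⟩
    · exact hsq ⟨1, rfl⟩
  have hn2 : ¬ 2 ∣ n := by
    intro hd
    have h1 : 2 ∣ n ^ (2 * k + 1) := hd.trans (dvd_pow_self _ (by omega))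
    have h2 : 2 ∣ 2 ^ y := dvd_pow_self 2 hy.ne'
    have h3 : 3 ^ x % 2 = 1 := by rw [Nat.pow_mod]; simp
    omega
  have hn3 : ¬ 3 ∣ n := by
    intro hd
    have h1 : 3 ∣ n ^ (2 * k + 1) := hd.trans (dvd_pow_self _ (by omega))
    have h2 : 3 ∣ 3 ^ x := dvd_pow_self 3 hx.ne'
    have h3 : 3 ∣ 2 ^ y := by omega
    have := Nat.prime_three.dvd_of_dvd_pow h3
    omega
  have c2 : IsCoprime (n : ℤ) 2 :=
    Nat.isCoprime_iff_coprime.2 ((Nat.prime_two.coprime_iff_not_dvd.2 hn2).symm)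
  have c3 : IsCoprime (n : ℤ) 3 :=
    Nat.isCoprime_iff_coprime.2 ((Nat.prime_three.coprime_iff_not_dvd.2 hn3).symm)
  have hz : (3 : ℤ) ^ x + 2 ^ y = (n : ℤ) ^ (2 * k + 1) := by exact_mod_cast h
  have hn1' : (1 : ℤ) < n := by exact_mod_cast hn1
  have h3x : (3 : ℤ) ∣ 3 ^ x := dvd_pow_self 3 hx.ne'
  obtain ⟨m, hm⟩ : ∃ m, x = 2 * m ∨ x = 2 * m + 1 := ⟨x / 2, by omega⟩
  obtain ⟨l, hl⟩ : ∃ l, y = 2 * l ∨ y = 2 * l + 1 := ⟨y / 2, by omega⟩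
  obtain ⟨a, b, hne, ha, hb, hd⟩ := thue n (by omega) hsq (3 ^ m) (2 ^ l)
  have cX : IsCoprime (n : ℤ) (3 ^ m) := c3.pow_right
  have cY : IsCoprime (n : ℤ) (2 ^ l) := c2.pow_right
  have sX : ((3 : ℤ) ^ m) ^ 2 = 3 ^ (2 * m) := by rw [← pow_mul, mul_comm]
  have sY : ((2 : ℤ) ^ l) ^ 2 = 2 ^ (2 * l) := by rw [← pow_mul, mul_comm]
  have hn2z : (n : ℤ) % 2 = 1 := by omega
  rcases hm with rfl | rfl <;> rcases hl with rfl | rfl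
  · have e : 1 * ((3 : ℤ) ^ m) ^ 2 + 1 * (2 ^ l) ^ 2 = (n : ℤ) ^ (2 * k + 1) := by
      rw [sX, sY, ← hz]; ring
    have e3 : (3 : ℤ) ∣ 1 * (3 ^ m) ^ 2 := by rw [sX, one_mul]; exact h3x
    obtain ⟨q, hq0, hq1, hq⟩ := quot_exists 1 1 a b _ _ n k (by norm_num) (by norm_num) hne ha hb hd cY e
    have hq2 : q = 1 := by omega
    subst hq2
    have hYe : Even ((2 : ℤ) ^ l) := (even_iff_two_dvd).2 (dvd_pow_self 2 (by omega))
    rcases Int.even_or_odd b with hbe | hbo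
    · exact core2 1 1 a b n k m l (by simp) (by simp) hn1' hk h3k (by linarith) e e3 c2 c3 hd
        (Or.inr ⟨hbe, hYe⟩)
    · have hae : Even a := by
        by_contra hae
        have h1 := (Int.not_even_iff_odd.1 hae).pow (n := 2)
        have h2 := hbo.pow (n := 2)
        have h3 := h1.add_odd h2
        have h4 : a ^ 2 + b ^ 2 = n := by linarith
        rw [h4, Int.even_iff] at h3
        omega
      refine core2 1 1 b (-a) n k m l (by simp) (by simp) hn1' hk h3k (by linarith) e e3 c2 c3
        (swap_aux 1 a b _ _ n k cY (by linarith) (by simpa using hd) isCoprime_one_right)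
        (Or.inr ⟨hae.neg, hYe⟩)
  · have e : 1 * ((3 : ℤ) ^ m) ^ 2 + 2 * (2 ^ l) ^ 2 = (n : ℤ) ^ (2 * k + 1) := by
      rw [sX, sY, ← hz]; ring
    have e3 : (3 : ℤ) ∣ 1 * (3 ^ m) ^ 2 := by rw [sX, one_mul]; exact h3x
    obtain ⟨q, hq0, hq1, hq⟩ := quot_exists 1 2 a b _ _ n k (by norm_num) (by norm_num) hne ha hb hd cY e
    have hq2 : q = 1 ∨ q = 2 := by omega
    rcases hq2 with rfl | rfl
    · exact core2 1 2 a b n k m l (by simp) (by simp) hn1' hk h3k (by linarith) e e3 c2 c3 hd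
        (Or.inl (by norm_num))
    · obtain ⟨a', rfl⟩ := even_of_sq a (n - b ^ 2) (by linarith)
      exact core2 1 2 b (-a') n k m l (by simp) (by simp) hn1' hk h3k (by linarith) e e3 c2 c3
        (swap_aux 2 a' b _ _ n k cY (by linarith) hd c2)
        (Or.inl (by norm_num))
  · have e : 3 * ((3 : ℤ) ^ m) ^ 2 + 1 * (2 ^ l) ^ 2 = (n : ℤ) ^ (2 * k + 1) := by
      rw [sX, sY, ← hz]; ring
    have e3 : (3 : ℤ) ∣ 3 * (3 ^ m) ^ 2 := Dvd.intro _ rfl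
    obtain ⟨q, hq0, hq1, hq⟩ := quot_exists 3 1 a b _ _ n k (by norm_num) (by norm_num) hne ha hb hd cY e
    have hq2 : q = 1 ∨ q = 2 ∨ q = 3 := by omega
    rcases hq2 with rfl | rfl | rfl
    · exact core2 3 1 a b n k m l (by simp) (by simp) hn1' hk h3k (by linarith) e e3 c2 c3 hd
        (Or.inl (by norm_num))
    · have := sq_mod4 a
      have := sq_mod4 b
      omega
    · obtain ⟨b', rfl⟩ := three_of_sq b (n - a ^ 2) (by linarith)
      exact core2 3 1 b' (-a) n k m l (by simp) (by simp) hn1' hk h3k (by linarith) e e3 c2 c3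
        (swap_aux2 3 a b' _ _ n k cX (by linarith) hd c3)
        (Or.inl (by norm_num))
  · have e : 3 * ((3 : ℤ) ^ m) ^ 2 + 2 * (2 ^ l) ^ 2 = (n : ℤ) ^ (2 * k + 1) := by
      rw [sX, sY, ← hz]; ring
    have e3 : (3 : ℤ) ∣ 3 * (3 ^ m) ^ 2 := Dvd.intro _ rfl
    have hnm : (n : ℤ) % 3 = 2 := by
      by_contra hne2
      have h1 : (n : ℤ) ≡ 1 [ZMOD 3] := by
        show (n : ℤ) % 3 = 1 % 3
        omega
      have h2 : (n : ℤ) ^ (2 * k + 1) % 3 = 1 := by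
        have h5 := h1.pow (2 * k + 1)
        rw [one_pow] at h5
        exact h5
      rw [← e] at h2
      have := sq_mod3 (2 ^ l)
      omega
    obtain ⟨q, hq0, hq1, hq⟩ := quot_exists 3 2 a b _ _ n k (by norm_num) (by norm_num) hne ha hb hd cY e
    have hq2 : q = 1 ∨ q = 2 ∨ q = 3 ∨ q = 4 := by omega
    rcases hq2 with rfl | rfl | rfl | rfl
    · exact core2 3 2 a b n k m l (by simp) (by simp) hn1' hk h3k (by linarith) e e3 c2 c3 hd
        (Or.inl (by norm_num))
    · have := sq_mod3 b
      omega
    · obtain ⟨b', rfl⟩ := three_of_sq b (b ^ 2 + a ^ 2 - n) (by linarith)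
      have := sq_mod3 a
      have : a ^ 2 + 6 * b' ^ 2 = n := by linarith
      omega
    · obtain ⟨a', rfl⟩ := even_of_sq a (2 * n - b ^ 2 - a ^ 2) (by linarith)
      obtain ⟨b', rfl⟩ := even_of_sq b (n - 3 * a' ^ 2) (by linarith)
      refine core2 3 2 a' b' n k m l (by simp) (by simp) hn1' hk h3k (by linarith) e e3 c2 c3 ?_
        (Or.inl (by norm_num))
      refine c2.dvd_of_dvd_mul_left (?_ : (n : ℤ) ∣ 2 * _)
      convert hd using 1
      ring

/-- Lemma 2.2: the only solution of `3^x + 2^y = n^z` in positive integers with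
`z > 1` is `3^2 + 2^4 = 5^2`. -/
theorem stmt_7 (x y z n : ℕ) (hx : 0 < x) (hy : 0 < y) (hn : 0 < n) (hz : 1 < z)
    (heq : 3 ^ x + 2 ^ y = n ^ z) :
    (x, y, z, n) = (2, 4, 2, 5) := by
  have five : ∀ c w : ℕ, 0 < w → c ^ w = 5 → w = 1 ∧ c = 5 := by
    intro c w hw hc
    have h1 : c ∣ 5 := hc ▸ dvd_pow_self c hw.ne'
    rcases (Nat.dvd_prime Nat.prime_five).1 h1 with rfl | rfl
    · simp at hc
    · exact ⟨Nat.pow_right_injective (by norm_num : 2 ≤ 5) (by simpa using hc), rfl⟩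
  obtain ⟨k, hk⟩ : ∃ k, z = 2 * k ∨ z = 2 * k + 1 := ⟨z / 2, by omega⟩
  rcases hk with rfl | rfl
  · rw [mul_comm, pow_mul] at heq
    obtain ⟨rfl, rfl, h5⟩ := even_case x y _ hx hy heq
    obtain ⟨rfl, rfl⟩ := five n k (by omega) h5
    rfl
  · exfalso
    by_cases h3 : 3 ∣ 2 * k + 1
    · obtain ⟨t, ht⟩ := h3
      rw [ht, mul_comm, pow_mul] at heq
      exact cube_case x y _ hx heq
    · by_cases hsq : ∃ m, n = m ^ 2
      · obtain ⟨m, rfl⟩ := hsq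
        rw [← pow_mul, mul_comm, pow_mul] at heq
        obtain ⟨-, -, h5⟩ := even_case x y _ hx hy heq
        have := (five m _ (by omega) h5).1
        omega
      · exact odd_case x y n k hx hy (by omega) h3 hsq heq
end
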